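/- arXiv:2012.06529 — 2 statements merged into one kernel-verified Lean document; each statement's English description precedes it below -/
import Mathlib

section
/- Let Φ = {f_i(x) = r_i x + t_i}_{i=1}^n be a Diophantine self-similar IFS on a compact interval I, and let ν be a self-similar measure for Φ. Then there exist α > 0, C > 0 and Q > 0 such that |F_q(ν)| ≤ C·(log|q|)^{−α} for all q ∈ ℝ with |q| ≥ Q. -/
/-!
Write `ν̂` for the Fourier transform and `G s = ‖ν̂ (exp s)‖²`. Self-similarity gives
`ν̂ q = ∑ pᵢ e(q tᵢ) ν̂ (rᵢ q)`, so by convexity `G s ≤ ∑ pᵢ G (s - aᵢ)` with `aᵢ = -log |rᵢ|`: the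
function `G` is subharmonic for the random walk on `ℝ` that moves down by `aᵢ` with probability `pᵢ`
(`sq_norm_fourierTransform_le`).

Two distinct fixed points force `ν (B(x, δ)) ≤ C δ ^ c` (`exists_frostman`), and hence the average
of `G` over a window of fixed length at height `y` is `O(exp (-c' y))` (`exists_window_bound`, by
computing a Gaussian-weighted energy of `ν̂` on the physical side).

Pointwise decay comes from averaging. Given a threshold `K`, the function `G` has a majorant `u`
which is harmonic beyond `K`, Lipschitz with constant `O(exp K)`, and inherits the window bound at
height `K`, namely `O(exp (-c' K))`, at all heights above `K` (`exists_majorant`). Since `u s` is the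
average of `u` over the position of the walk after `n` steps, smoothing that position with a
Gaussian of width `η` bounds `u s` by the sup of the smoothed density times the integral of `u` over
a window of radius `B`, plus a Chebyshev error and a Lipschitz error `O(exp K * η)`
(`harmonic_le_integral`). The Diophantine condition bounds the characteristic function of a step
away from `1` polynomially, so that with `η = n ^ (-κ)` the smoothed density is `O(n ^ (-1/2))`
(`exists_density_bound`). The choices `exp K = n ^ (κ / 2)`, `B = n ^ (1 / 2 + ε)` and `n`
comparable to `s` give `G s = O(s ^ (-ε))` (`exists_decay_nat`), where `s = log |q|`.
-/

open MeasureTheory Filter Set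
open scoped ENNReal Topology

noncomputable section

/-- The Fourier transform of a Borel measure on `ℝ` at frequency `q`. -/
def fourierTransform (ν : Measure ℝ) (q : ℝ) : ℂ :=
  ∫ x, Complex.exp (((2 * Real.pi * q * x : ℝ) : ℂ) * Complex.I) ∂ν

/-- `ν` is a Rajchman measure: its Fourier transform vanishes at infinity. -/
def Rajchman (ν : Measure ℝ) : Prop :=
  Tendsto (fun q : ℝ => fourierTransform ν q) (cocompact ℝ) (nhds 0)

/-! ### Harmonic majorants for a random walk -/

/-- The averaging operator of the random walk with steps `a i` taken with probability `P i`. -/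
def stepAvg {ι : Type*} [Fintype ι] (P a : ι → ℝ) (v : ℝ → ℝ) (x : ℝ) : ℝ :=
  ∑ i, P i * v (x - a i)

/-- Induction along the real line in steps of length at least `ℓ`. -/
lemma ladder_induction {ℓ K : ℝ} (hℓ : 0 < ℓ) {Q : ℝ → Prop} (h0 : ∀ x ≤ K, Q x)
    (h1 : ∀ x, K < x → (∀ y ≤ x - ℓ, Q y) → Q x) (x : ℝ) : Q x := by
  have key : ∀ N : ℕ, ∀ x, x ≤ K + N * ℓ → Q x := by
    intro N
    induction N with
    | zero => intro x hx; exact h0 x (by simpa using hx)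
    | succ N ih =>
      intro x hx
      by_cases hxK : x ≤ K
      · exact h0 x hxK
      · refine h1 x (not_le.mp hxK) fun y hy => ih y ?_
        push_cast at hx
        linarith
  obtain ⟨N, hN⟩ := exists_nat_ge ((x - K) / ℓ)
  refine key N x ?_
  rw [div_le_iff₀ hℓ] at hN
  linarith

section Harmonic

variable {ι : Type*} [Fintype ι] {P a : ι → ℝ} {ℓ : ℝ}

lemma exists_harmonic_extension (hℓ : 0 < ℓ) (ha : ∀ i, ℓ ≤ a i) (g : ℝ → ℝ) (K : ℝ) :
    ∃ u : ℝ → ℝ, (∀ x ≤ K, u x = g x) ∧ ∀ x, K < x → u x = stepAvg P a u x := by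
  classical
  let T : (ℝ → ℝ) → ℝ → ℝ := fun v x => if x ≤ K then v x else stepAvg P a v x
  have T_le : ∀ v x, x ≤ K → T v x = v x := fun v x hx => if_pos hx
  have T_gt : ∀ v x, ¬ x ≤ K → T v x = stepAvg P a v x := fun v x hx => if_neg hx
  have hstab : ∀ N : ℕ, ∀ x, x ≤ K + N * ℓ → T^[N + 1] g x = T^[N] g x := by
    intro N
    induction N with
    | zero =>
      intro x hx
      have : x ≤ K := by simpa using hx
      simp [T_le _ _ this]
    | succ N ih =>
      intro x hx
      by_cases hxK : x ≤ K
      · rw [Function.iterate_succ_apply', T_le _ _ hxK]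
      · rw [Function.iterate_succ_apply', Function.iterate_succ_apply' T N,
          T_gt _ _ hxK, T_gt _ _ hxK]
        refine Finset.sum_congr rfl fun i _ => ?_
        rw [← Function.iterate_succ_apply' T N, ih]
        push_cast at hx
        linarith [ha i]
  have hstab2 : ∀ N M : ℕ, ∀ x, x ≤ K + N * ℓ → N ≤ M → T^[M] g x = T^[N] g x := by
    intro N M x hx hNM
    induction M, hNM using Nat.le_induction with
    | base => rfl
    | succ M hM ih =>
      rw [hstab M x ?_, ih]
      have : (N : ℝ) ≤ M := by exact_mod_cast hM
      nlinarith
  have hceil : ∀ x, x ≤ K + (⌈(x - K) / ℓ⌉₊ : ℝ) * ℓ := by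
    intro x
    have := Nat.le_ceil ((x - K) / ℓ)
    rw [div_le_iff₀ hℓ] at this
    linarith
  refine ⟨fun x => T^[⌈(x - K) / ℓ⌉₊] g x, ?_, ?_⟩
  · intro x hx
    have : ⌈(x - K) / ℓ⌉₊ = 0 := by
      rw [Nat.ceil_eq_zero]
      exact div_nonpos_of_nonpos_of_nonneg (by linarith) hℓ.le
    simp [this]
  · intro x hx
    have h1 := hstab _ x (hceil x)
    simp only
    rw [← h1, Function.iterate_succ_apply']
    rw [T_gt _ _ (not_le.mpr hx)]
    refine Finset.sum_congr rfl fun i _ => ?_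
    congr 1
    refine hstab2 _ _ _ (hceil _) ?_
    apply Nat.ceil_mono
    have := ha i
    gcongr
    linarith

lemma harmonic_le (hℓ : 0 < ℓ) (ha : ∀ i, ℓ ≤ a i) (hP : ∀ i, 0 ≤ P i)
    {G u : ℝ → ℝ} {K : ℝ} (hu : ∀ x, K < x → u x = stepAvg P a u x)
    (hG : ∀ x, G x ≤ stepAvg P a G x) (h0 : ∀ x ≤ K, G x ≤ u x) (x : ℝ) : G x ≤ u x := by
  refine ladder_induction (Q := fun x => G x ≤ u x) hℓ h0 (fun x hx ih => ?_) x
  rw [hu x hx]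
  refine (hG x).trans (Finset.sum_le_sum fun i _ => ?_)
  exact mul_le_mul_of_nonneg_left (ih _ (by linarith [ha i])) (hP i)

lemma harmonic_mem_unit (hℓ : 0 < ℓ) (ha : ∀ i, ℓ ≤ a i) (hP : ∀ i, 0 ≤ P i)
    (hP1 : ∑ i, P i = 1) {u : ℝ → ℝ} {K : ℝ} (hu : ∀ x, K < x → u x = stepAvg P a u x)
    (h0 : ∀ x ≤ K, 0 ≤ u x ∧ u x ≤ 1) (x : ℝ) : 0 ≤ u x ∧ u x ≤ 1 := by
  refine ladder_induction (Q := fun x => 0 ≤ u x ∧ u x ≤ 1) hℓ h0 (fun x hx ih => ?_) x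
  rw [hu x hx]
  constructor
  · exact Finset.sum_nonneg fun i _ => mul_nonneg (hP i) (ih _ (by linarith [ha i])).1
  · rw [← hP1]
    refine Finset.sum_le_sum fun i _ => ?_
    exact mul_le_of_le_one_right (hP i) (ih _ (by linarith [ha i])).2

lemma abs_stepAvg_sub_le (hP : ∀ i, 0 ≤ P i) (hP1 : ∑ i, P i = 1) {u : ℝ → ℝ} {x y D : ℝ}
    (h : ∀ i, |u (x - a i) - u (y - a i)| ≤ D) :
    |stepAvg P a u x - stepAvg P a u y| ≤ D := by
  unfold stepAvg
  rw [← Finset.sum_sub_distrib]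
  calc _ ≤ ∑ i, |P i * u (x - a i) - P i * u (y - a i)| := Finset.abs_sum_le_sum_abs _ _
    _ ≤ ∑ i, P i * D := by
        refine Finset.sum_le_sum fun i _ => ?_
        rw [← mul_sub, abs_mul, abs_of_nonneg (hP i)]
        exact mul_le_mul_of_nonneg_left (h i) (hP i)
    _ = D := by rw [← Finset.sum_mul, hP1, one_mul]

lemma harmonic_lipschitz (hℓ : 0 < ℓ) (ha : ∀ i, ℓ ≤ a i) (hP : ∀ i, 0 ≤ P i)
    (hP1 : ∑ i, P i = 1) {u : ℝ → ℝ} {K L : ℝ} (hu : ∀ x, K ≤ x → u x = stepAvg P a u x)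
    (h0 : ∀ x ≤ K, ∀ y ≤ K, |u x - u y| ≤ L * |x - y|) (x y : ℝ) :
    |u x - u y| ≤ L * |x - y| := by
  have key : ∀ Y, ∀ x y, x ≤ y → y ≤ Y → |u x - u y| ≤ L * |x - y| := by
    refine ladder_induction (K := K) hℓ (fun Y hY x y hxy hy =>
      h0 x (by linarith) y (by linarith)) (fun Y hY ih => ?_)
    have hi : ∀ x y, x ≤ y → y ≤ Y → K ≤ x → |u x - u y| ≤ L * |x - y| := by
      intro x y hxy hyY hx
      rw [hu x hx, hu y (hx.trans hxy)]
      refine abs_stepAvg_sub_le hP hP1 fun i => ?_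
      have := ih (Y - ℓ) le_rfl (x - a i) (y - a i) (by linarith) (by linarith [ha i])
      simpa using this
    intro x y hxy hyY
    rcases le_total y K with hyK | hyK
    · exact h0 x (by linarith) y hyK
    rcases le_total K x with hxK | hxK
    · exact hi x y hxy hyY hxK
    have h1 := h0 x hxK K le_rfl
    have h2 := hi K y hyK hyY le_rfl
    rw [abs_of_nonpos (by linarith : x - K ≤ 0)] at h1
    rw [abs_of_nonpos (by linarith : K - y ≤ 0)] at h2
    rw [abs_of_nonpos (by linarith : x - y ≤ 0)]
    have := abs_sub_le (u x) (u K) (u y)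
    linarith
  rcases le_total x y with h | h
  · exact key y x y h le_rfl
  · rw [abs_sub_comm, abs_sub_comm x]; exact key x y x h le_rfl

lemma intervalIntegral_stepAvg {u : ℝ → ℝ} (hc : Continuous u) (c d : ℝ) :
    ∫ x in c..d, stepAvg P a u x = ∑ i, P i * ∫ x in (c - a i)..(d - a i), u x := by
  unfold stepAvg
  rw [intervalIntegral.integral_finsetSum]
  · refine Finset.sum_congr rfl fun i _ => ?_
    rw [intervalIntegral.integral_const_mul, intervalIntegral.integral_comp_sub_right]
  · intro i _
    exact (by fun_prop : Continuous fun x => P i * u (x - a i)).intervalIntegrable _ _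

lemma sum_mul_le_of_le (hP : ∀ i, 0 ≤ P i) (hP1 : ∑ i, P i = 1) {v : ι → ℝ} {D : ℝ}
    (h : ∀ i, v i ≤ D) : ∑ i, P i * v i ≤ D := by
  calc _ ≤ ∑ i, P i * D := Finset.sum_le_sum fun i _ => mul_le_mul_of_nonneg_left (h i) (hP i)
    _ = D := by rw [← Finset.sum_mul, hP1, one_mul]

/-- Maximum principle for the averages of a harmonic function over windows of length `ℓ`. The
factor `2` pays for the windows that straddle the boundary point `K`. -/
lemma harmonic_window (hℓ : 0 < ℓ) {A : ℝ} (ha : ∀ i, ℓ ≤ a i) (haA : ∀ i, a i ≤ A)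
    (hP : ∀ i, 0 ≤ P i) (hP1 : ∑ i, P i = 1) {u : ℝ → ℝ} (hc : Continuous u)
    (hu0 : ∀ x, 0 ≤ u x) {K E : ℝ} (hu : ∀ x, K ≤ x → u x = stepAvg P a u x)
    (hE : ∀ y, K - A ≤ y → y ≤ K → ∫ x in (y - ℓ)..y, u x ≤ E) (hA : 0 ≤ A) (y : ℝ)
    (hy : K - A ≤ y) : ∫ x in (y - ℓ)..y, u x ≤ 2 * E := by
  have hInt : ∀ c d, IntervalIntegrable u volume c d := fun c d => hc.intervalIntegrable _ _
  have hE0 : 0 ≤ E := by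
    refine le_trans ?_ (hE K (by linarith) le_rfl)
    exact intervalIntegral.integral_nonneg (by linarith) fun x _ => hu0 x
  have hcongr : ∀ c d, K ≤ c → c ≤ d →
      ∫ x in c..d, u x = ∑ i, P i * ∫ x in (c - a i)..(d - a i), u x := by
    intro c d hKc hcd
    rw [← intervalIntegral_stepAvg hc]
    refine intervalIntegral.integral_congr fun x hx => ?_
    rw [uIcc_of_le hcd] at hx
    exact hu x (hKc.trans hx.1)
  refine ladder_induction (K := K + ℓ) (Q := fun y => K - A ≤ y → ∫ x in (y - ℓ)..y, u x ≤ 2 * E)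
    hℓ (fun y hyK hyA => ?_) (fun y hyK ih hyA => ?_) y hy
  · rcases le_total y K with h | h
    · linarith [hE y hyA h]
    · rw [← intervalIntegral.integral_add_adjacent_intervals (hInt (y - ℓ) K) (hInt K y)]
      have h1 : ∫ x in (y - ℓ)..K, u x ≤ E := by
        refine le_trans ?_ (hE K (by linarith) le_rfl)
        exact intervalIntegral.integral_mono_interval (by linarith) (by linarith) le_rfl
          (Eventually.of_forall hu0) (hInt _ _)
      have h2 : ∫ x in K..y, u x ≤ E := by
        rw [hcongr K y le_rfl h]
        refine sum_mul_le_of_le hP hP1 fun i => ?_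
        have := ha i
        have := haA i
        refine le_trans ?_ (hE (y - a i) (by linarith) (by linarith))
        exact intervalIntegral.integral_mono_interval (by linarith) (by linarith) le_rfl
          (Eventually.of_forall hu0) (hInt _ _)
      linarith
  · rw [hcongr _ _ (by linarith) (by linarith)]
    refine sum_mul_le_of_le hP hP1 fun i => ?_
    have h1 := ha i
    have h2 := haA i
    have := ih (y - a i) (by linarith) (by linarith)
    rwa [show y - ℓ - a i = y - a i - ℓ by ring]

lemma integral_le_of_window (hℓ : 0 < ℓ) {u : ℝ → ℝ} (hc : Continuous u) (hu0 : ∀ x, 0 ≤ u x)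
    {K E : ℝ} (hE : ∀ y, K ≤ y → ∫ x in (y - ℓ)..y, u x ≤ E) {c d : ℝ} (hKc : K ≤ c)
    (hcd : c ≤ d) : ∫ x in c..d, u x ≤ ((d - c) / ℓ + 1) * E := by
  have hInt : ∀ c d, IntervalIntegrable u volume c d := fun c d => hc.intervalIntegrable _ _
  have key : ∀ M : ℕ, ∫ x in c..(c + M * ℓ), u x ≤ M * E := by
    intro M
    induction M with
    | zero => simp
    | succ M ih =>
      rw [← intervalIntegral.integral_add_adjacent_intervals (hInt c (c + M * ℓ)) (hInt _ _)]
      have hM : (0 : ℝ) ≤ M * ℓ := by positivity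
      have := hE (c + (M + 1 : ℕ) * ℓ) (by push_cast; linarith)
      rw [show c + ((M + 1 : ℕ) : ℝ) * ℓ - ℓ = c + M * ℓ by push_cast; ring] at this
      push_cast at this ⊢
      linarith
  have hE0 : 0 ≤ E := by
    refine le_trans ?_ (hE K le_rfl)
    exact intervalIntegral.integral_nonneg (by linarith) fun x _ => hu0 x
  have h1 := Nat.le_ceil ((d - c) / ℓ)
  have h2 := (Nat.ceil_lt_add_one (div_nonneg (sub_nonneg.mpr hcd) hℓ.le)).le
  calc ∫ x in c..d, u x ≤ ∫ x in c..(c + ⌈(d - c) / ℓ⌉₊ * ℓ), u x := by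
        rw [div_le_iff₀ hℓ] at h1
        exact intervalIntegral.integral_mono_interval le_rfl hcd (by linarith)
          (Eventually.of_forall hu0) (hInt _ _)
    _ ≤ _ := (key _).trans (mul_le_mul_of_nonneg_right h2 hE0)

/-- A bounded subharmonic function `G` has a harmonic majorant on `[K, ∞)` whose Lipschitz constant
and window averages are controlled by those of `G` near `K`. The boundary data interpolate linearly
between `G` at `K - ℓ` and its average at `K`, which makes the extension continuous at `K`. -/
lemma exists_majorant (hℓ : 0 < ℓ) {A : ℝ} (ha : ∀ i, ℓ ≤ a i) (haA : ∀ i, a i ≤ A)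
    (hP : ∀ i, 0 ≤ P i) (hP1 : ∑ i, P i = 1) (hA : 0 ≤ A) {G : ℝ → ℝ} (hGc : Continuous G)
    (hG0 : ∀ x, 0 ≤ G x) (hG1 : ∀ x, G x ≤ 1) (hG : ∀ x, G x ≤ stepAvg P a G x)
    {K Λ E : ℝ} (hΛ : ∀ x ≤ K, ∀ y ≤ K, |G x - G y| ≤ Λ * |x - y|)
    (hE : ∀ y, K - 2 * A ≤ y → y ≤ K → ∫ x in (y - ℓ)..y, G x ≤ E) :
    ∃ u : ℝ → ℝ, (∀ x, G x ≤ u x) ∧ (∀ x, 0 ≤ u x ∧ u x ≤ 1) ∧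
      (∀ x y, |u x - u y| ≤ (1 / ℓ + Λ) * |x - y|) ∧
      (∀ x, K ≤ x → u x = stepAvg P a u x) ∧
      ∀ y, K ≤ y → ∫ x in (y - ℓ)..y, u x ≤ 4 * E := by
  set h : ℝ → ℝ := fun x => max 0 (min 1 ((K - x) / ℓ)) with hh
  have h0 : ∀ x, 0 ≤ h x := fun x => le_max_left _ _
  have h1 : ∀ x, h x ≤ 1 := fun x => max_le zero_le_one (min_le_left _ _)
  have hhc : Continuous h := by fun_prop
  have hhL : ∀ x y, |h x - h y| ≤ 1 / ℓ * |x - y| := by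
    intro x y
    refine (abs_max_sub_max_le_max _ _ _ _).trans ?_
    refine max_le (by simp only [sub_self, abs_zero]; positivity) ?_
    refine (abs_min_sub_min_le_max _ _ _ _).trans ?_
    refine max_le (by simp only [sub_self, abs_zero]; positivity) ?_
    rw [← sub_div, abs_div, abs_of_pos hℓ, abs_sub_comm x y]
    apply le_of_eq
    rw [show K - x - (K - y) = y - x by ring]
    ring
  have hPG0 : ∀ x, 0 ≤ stepAvg P a G x := fun x =>
    Finset.sum_nonneg fun i _ => mul_nonneg (hP i) (hG0 _)
  have hPG1 : ∀ x, stepAvg P a G x ≤ 1 := fun x => sum_mul_le_of_le hP hP1 fun i => hG1 _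
  have hPGc : Continuous (stepAvg P a G) := by unfold stepAvg; fun_prop
  set g : ℝ → ℝ := fun x => h x * G x + (1 - h x) * stepAvg P a G x with hg
  have hGg : ∀ x, G x ≤ g x := by
    intro x
    have := mul_le_mul_of_nonneg_left (hG x) (sub_nonneg.mpr (h1 x))
    simp only [hg]
    linarith
  have hg01 : ∀ x, 0 ≤ g x ∧ g x ≤ 1 := by
    intro x
    refine ⟨(hG0 x).trans (hGg x), ?_⟩
    have e1 := mul_le_mul_of_nonneg_left (hG1 x) (h0 x)
    have e2 := mul_le_mul_of_nonneg_left (hPG1 x) (sub_nonneg.mpr (h1 x))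
    simp only [hg]
    linarith
  have hgle : ∀ x, g x ≤ G x + stepAvg P a G x := by
    intro x
    have e1 := mul_le_mul_of_nonneg_right (h1 x) (hG0 x)
    have e2 := mul_nonneg (h0 x) (hPG0 x)
    simp only [hg]
    linarith
  obtain ⟨u, hug, huP⟩ := exists_harmonic_extension (P := P) hℓ ha g K
  have hfar : ∀ x ≤ K - ℓ, u x = G x := by
    intro x hx
    have : h x = 1 := by
      have : 1 ≤ (K - x) / ℓ := by rw [le_div_iff₀ hℓ]; linarith
      simp [hh, min_eq_left this]
    rw [hug x (by linarith)]
    simp [hg, this]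
  have huP' : ∀ x, K ≤ x → u x = stepAvg P a u x := by
    intro x hx
    rcases hx.eq_or_lt with rfl | hx
    · rw [hug K le_rfl]
      have hK0 : h K = 0 := by simp [hh]
      simp only [hg, hK0, zero_mul, sub_zero, one_mul, zero_add, stepAvg]
      refine Finset.sum_congr rfl fun i _ => ?_
      rw [hfar _ (by linarith [ha i])]
    · exact huP x hx
  have hu01 := harmonic_mem_unit hℓ ha hP hP1 huP (fun x hx => by rw [hug x hx]; exact hg01 x)
  have huL := harmonic_lipschitz (L := 1 / ℓ + Λ) hℓ ha hP hP1 huP' (fun x hx y hy => by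
    rw [hug x hx, hug y hy]
    have e1 : |stepAvg P a G x - stepAvg P a G y| ≤ Λ * |x - y| := by
      refine abs_stepAvg_sub_le hP hP1 fun i => ?_
      have := hΛ (x - a i) (by linarith [ha i]) (y - a i) (by linarith [ha i])
      simpa using this
    have e2 : g x - g y = (h x - h y) * (G x - stepAvg P a G x) + h y * (G x - G y)
        + (1 - h y) * (stepAvg P a G x - stepAvg P a G y) := by simp only [hg]; ring
    have e3 : |G x - stepAvg P a G x| ≤ 1 := by
      rw [abs_le]; constructor <;> linarith [hG0 x, hG1 x, hPG0 x, hPG1 x]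
    rw [e2]
    refine (abs_add_three _ _ _).trans ?_
    rw [abs_mul, abs_mul, abs_mul, abs_of_nonneg (h0 y), abs_of_nonneg (sub_nonneg.mpr (h1 y))]
    have f1 := mul_le_mul (hhL x y) e3 (abs_nonneg _) (by positivity)
    have f2 := mul_le_mul_of_nonneg_left (hΛ x hx y hy) (h0 y)
    have f3 := mul_le_mul_of_nonneg_left e1 (sub_nonneg.mpr (h1 y))
    linarith)
  have huc : Continuous u := by
    have hL0 : LipschitzWith (Real.toNNReal (1 / ℓ + Λ)) u := by
      refine LipschitzWith.of_dist_le_mul fun x y => ?_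
      rw [Real.dist_eq, Real.dist_eq]
      refine (huL x y).trans ?_
      exact mul_le_mul_of_nonneg_right (Real.le_coe_toNNReal _) (abs_nonneg _)
    exact hL0.continuous
  refine ⟨u, harmonic_le hℓ ha hP huP hG (fun x hx => by rw [hug x hx]; exact hGg x), hu01, huL,
    huP', fun y hy => ?_⟩
  have := harmonic_window (E := 2 * E) hℓ ha haA hP hP1 huc (fun x => (hu01 x).1) huP'
    (fun y hy1 hy2 => ?_) hA y (by linarith)
  · linarith
  · calc ∫ x in (y - ℓ)..y, u x = ∫ x in (y - ℓ)..y, g x := by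
          refine intervalIntegral.integral_congr fun x hx => ?_
          rw [uIcc_of_le (by linarith)] at hx
          exact hug x (hx.2.trans hy2)
      _ ≤ ∫ x in (y - ℓ)..y, (G x + stepAvg P a G x) := by
          refine intervalIntegral.integral_mono_on (by linarith) ?_ ?_ fun x _ => hgle x
          · exact (by fun_prop : Continuous g).intervalIntegrable _ _
          · exact (hGc.add hPGc).intervalIntegrable _ _
      _ ≤ E + E := by
          rw [intervalIntegral.integral_add (hGc.intervalIntegrable _ _)
            (hPGc.intervalIntegrable _ _), intervalIntegral_stepAvg hGc]
          refine add_le_add (hE y (by linarith) hy2) (sum_mul_le_of_le hP hP1 fun i => ?_)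
          have := hE (y - a i) (by linarith [haA i]) (by linarith [ha i])
          rwa [show y - ℓ - a i = y - a i - ℓ by ring]
      _ = 2 * E := by ring

end Harmonic

/-! ### Localisation of harmonic functions -/

/-- The centred Gaussian probability density of width `η`. -/
def gaussK (η x : ℝ) : ℝ := η⁻¹ * Real.exp (-Real.pi * (x / η) ^ 2)

lemma gaussK_nonneg {η : ℝ} (hη : 0 < η) (x : ℝ) : 0 ≤ gaussK η x := by
  unfold gaussK; positivity

lemma integrable_one_add_sq_mul_gauss :
    Integrable fun x : ℝ => (1 + x ^ 2) * Real.exp (-Real.pi * x ^ 2) := by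
  have h0 := integrable_exp_neg_mul_sq Real.pi_pos
  have h2 := integrable_rpow_mul_exp_neg_mul_sq Real.pi_pos (by norm_num : (-1 : ℝ) < 2)
  refine (h0.add h2).congr (Eventually.of_forall fun x => ?_)
  simp only [Pi.add_apply, Real.rpow_two]
  ring

lemma integrable_mul_gauss {ψ : ℝ → ℝ} (hc : Continuous ψ) {C : ℝ}
    (hψ : ∀ x, |ψ x| ≤ C * (1 + x ^ 2)) :
    Integrable fun x : ℝ => ψ x * Real.exp (-Real.pi * x ^ 2) := by
  refine (integrable_one_add_sq_mul_gauss.const_mul C).mono'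
    (by fun_prop) (Eventually.of_forall fun x => ?_)
  rw [Real.norm_eq_abs, abs_mul, abs_of_pos (Real.exp_pos _), ← mul_assoc]
  exact mul_le_mul_of_nonneg_right (hψ x) (Real.exp_pos _).le

lemma integrable_mul_gaussK {η : ℝ} (hη : 0 < η) {ψ : ℝ → ℝ} (hc : Continuous ψ) {C : ℝ}
    (hC : 0 ≤ C) (hψ : ∀ x, |ψ x| ≤ C * (1 + x ^ 2)) (c : ℝ) :
    Integrable fun x : ℝ => ψ x * gaussK η (x - c) := by
  have h1 : Integrable fun x : ℝ => ψ (η * x + c) * Real.exp (-Real.pi * x ^ 2) := by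
    refine integrable_mul_gauss (C := C * (1 + 2 * η ^ 2 + 2 * c ^ 2)) (by fun_prop) fun x => ?_
    refine (hψ _).trans ?_
    rw [mul_assoc]
    refine mul_le_mul_of_nonneg_left ?_ hC
    nlinarith [sq_nonneg (η * x - c), sq_nonneg (c * x), sq_nonneg x, sq_nonneg c, sq_nonneg η]
  have h2 := ((h1.comp_div hη.ne').comp_sub_right c).const_mul η⁻¹
  refine h2.congr (Eventually.of_forall fun x => ?_)
  simp only [gaussK]
  rw [mul_div_cancel₀ _ hη.ne', sub_add_cancel]
  ring

lemma integral_mul_gaussK {η : ℝ} (hη : 0 < η) (ψ : ℝ → ℝ) :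
    ∫ x, ψ x * gaussK η x = ∫ x, ψ (η * x) * Real.exp (-Real.pi * x ^ 2) := by
  have := Measure.integral_comp_div (fun x => ψ (η * x) * Real.exp (-Real.pi * x ^ 2)) η
  rw [abs_of_pos hη, smul_eq_mul] at this
  rw [← mul_right_inj' hη.ne', ← this, ← integral_const_mul]
  congr 1
  ext x
  rw [mul_div_cancel₀ _ hη.ne']
  simp only [gaussK]
  field_simp

lemma integral_gaussK {η : ℝ} (hη : 0 < η) : ∫ x, gaussK η x = 1 := by
  have := integral_mul_gaussK hη (fun _ => 1)
  simp only [one_mul] at this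
  rw [this, integral_gaussian, div_self Real.pi_ne_zero, Real.sqrt_one]

/-- First absolute moment of the standard Gaussian `exp (-π x²)`. -/
def gaussM1 : ℝ := ∫ x, |x| * Real.exp (-Real.pi * x ^ 2)

/-- Second moment of the standard Gaussian `exp (-π x²)`. -/
def gaussM2 : ℝ := ∫ x, x ^ 2 * Real.exp (-Real.pi * x ^ 2)

lemma gaussM1_nonneg : 0 ≤ gaussM1 := integral_nonneg fun x => by positivity
lemma gaussM2_nonneg : 0 ≤ gaussM2 := integral_nonneg fun x => by positivity

lemma integral_abs_mul_gaussK {η : ℝ} (hη : 0 < η) : ∫ x, |x| * gaussK η x = η * gaussM1 := by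
  rw [integral_mul_gaussK hη (fun x => |x|), gaussM1, ← integral_const_mul]
  congr 1; ext x
  rw [abs_mul, abs_of_pos hη]; ring

lemma integral_sq_mul_gaussK {η : ℝ} (hη : 0 < η) :
    ∫ x, x ^ 2 * gaussK η x = η ^ 2 * gaussM2 := by
  rw [integral_mul_gaussK hη (fun x => x ^ 2), gaussM2, ← integral_const_mul]
  congr 1; ext x
  ring

section Smoothing

variable {ι : Type*} [Fintype ι] {P a : ι → ℝ}

/-- Pairs `(ψ, ρ)` for which `ψ` is integrable against all translates of `ρ`. -/
def TransInt (ψ ρ : ℝ → ℝ) : Prop := ∀ c, Integrable fun x => ψ x * ρ (x - c)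

lemma TransInt.stepAvg_right {ψ ρ : ℝ → ℝ} (h : TransInt ψ ρ) : TransInt ψ (stepAvg P a ρ) := by
  intro c
  have : Integrable fun x => ∑ i, P i * (ψ x * ρ (x - (c + a i))) :=
    integrable_finsetSum _ fun i _ => (h _).const_mul _
  refine this.congr (Eventually.of_forall fun x => ?_)
  simp only [stepAvg, Finset.mul_sum]
  refine Finset.sum_congr rfl fun i _ => ?_
  rw [sub_sub]; ring

lemma TransInt.stepAvg_left {ψ ρ : ℝ → ℝ} (h : TransInt ψ ρ) : TransInt (stepAvg P a ψ) ρ := by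
  intro c
  have : Integrable fun x => ∑ i, P i * (ψ (x - a i) * ρ (x - a i - (c - a i))) :=
    integrable_finsetSum _ fun i _ => ((h (c - a i)).comp_sub_right (a i)).const_mul _
  refine this.congr (Eventually.of_forall fun x => ?_)
  simp only [stepAvg, Finset.sum_mul]
  refine Finset.sum_congr rfl fun i _ => ?_
  rw [show x - a i - (c - a i) = x - c by ring]; ring

lemma TransInt.iterate_right {ψ ρ : ℝ → ℝ} (h : TransInt ψ ρ) (n : ℕ) :
    TransInt ψ ((stepAvg P a)^[n] ρ) := by
  induction n with
  | zero => exact h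
  | succ n ih => rw [Function.iterate_succ_apply']; exact ih.stepAvg_right

lemma TransInt.integrable {ψ ρ : ℝ → ℝ} (h : TransInt ψ ρ) : Integrable fun x => ψ x * ρ x := by
  simpa using h 0

/-- Reflection of the steps gives the adjoint of the averaging operator. -/
lemma integral_mul_stepAvg {ψ ρ : ℝ → ℝ} (h : TransInt ψ ρ) :
    ∫ x, ψ x * stepAvg P a ρ x = ∫ x, stepAvg P (fun i => -a i) ψ x * ρ x := by
  simp only [stepAvg, Finset.mul_sum, Finset.sum_mul]
  rw [integral_finsetSum, integral_finsetSum]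
  · refine Finset.sum_congr rfl fun i _ => ?_
    rw [← integral_sub_right_eq_self (fun x => P i * ψ (x - -a i) * ρ x) (a i)]
    congr 1; ext x
    rw [show x - a i - -a i = x by ring]; ring
  · intro i _
    have := ((h (a i)).comp_sub_right (-a i)).const_mul (P i)
    refine this.congr (Eventually.of_forall fun x => ?_)
    simp only [sub_neg_eq_add, add_sub_cancel_right]
    ring
  · intro i _
    refine ((h (a i)).const_mul (P i)).congr (Eventually.of_forall fun x => ?_)
    simp only; ring

lemma integral_mul_iterate (n : ℕ) {ψ ρ : ℝ → ℝ} (h : TransInt ψ ρ) :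
    ∫ x, ψ x * (stepAvg P a)^[n] ρ x = ∫ x, (stepAvg P (fun i => -a i))^[n] ψ x * ρ x := by
  induction n generalizing ψ with
  | zero => rfl
  | succ n ih =>
    rw [Function.iterate_succ_apply', integral_mul_stepAvg (h.iterate_right n), ih h.stepAvg_left,
      Function.iterate_succ_apply]

lemma iterate_reflect (u : ℝ → ℝ) (s : ℝ) (n : ℕ) (x : ℝ) :
    (stepAvg P (fun i => -a i))^[n] (fun x => u (s - x)) x = (stepAvg P a)^[n] u (s - x) := by
  induction n generalizing x with
  | zero => rfl
  | succ n ih =>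
    rw [Function.iterate_succ_apply', Function.iterate_succ_apply']
    simp only [stepAvg]
    refine Finset.sum_congr rfl fun i _ => ?_
    rw [ih, show s - (x - -a i) = s - x - a i by ring]

lemma iterate_sq (hP1 : ∑ i, P i = 1) (c : ℝ) (n : ℕ) (x : ℝ) :
    (stepAvg P (fun i => -a i))^[n] (fun x => (x - c) ^ 2) x =
      (x - c + n * ∑ i, P i * a i) ^ 2 + n * ∑ i, P i * (a i - ∑ j, P j * a j) ^ 2 := by
  set m := ∑ j, P j * a j with hm
  set σ := ∑ i, P i * (a i - m) ^ 2 with hσ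
  induction n generalizing x with
  | zero => simp
  | succ n ih =>
    rw [Function.iterate_succ_apply']
    simp only [stepAvg]
    have h1 : ∀ i, P i * (stepAvg P (fun i => -a i))^[n] (fun x => (x - c) ^ 2) (x - -a i) =
        P i * (((x - c + n * m) + m) ^ 2 + n * σ)
        + (P i * a i) * (2 * (x - c + n * m + m)) - P i * (2 * (x - c + n * m + m) * m)
        + P i * (a i - m) ^ 2 := by
      intro i
      rw [ih]; ring
    rw [Finset.sum_congr rfl fun i _ => h1 i]
    rw [Finset.sum_add_distrib, Finset.sum_sub_distrib, Finset.sum_add_distrib, ← Finset.sum_mul,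
      ← Finset.sum_mul, ← Finset.sum_mul, hP1, ← hm, ← hσ]
    push_cast
    ring

lemma iterate_harmonic {A : ℝ} (hA : 0 ≤ A) (haA : ∀ i, a i ≤ A) {u : ℝ → ℝ} {K : ℝ}
    (hu : ∀ x, K ≤ x → u x = stepAvg P a u x) (n : ℕ) (s : ℝ) (hs : K ≤ s - n * A) :
    (stepAvg P a)^[n] u s = u s := by
  induction n generalizing s with
  | zero => rfl
  | succ n ih =>
    push_cast at hs
    have hn : 0 ≤ (n : ℝ) * A := by positivity
    rw [Function.iterate_succ_apply', hu s (by linarith)]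
    refine Finset.sum_congr rfl fun i _ => ?_
    rw [ih _ (by linarith [haA i])]

lemma iterate_lipschitz (hP : ∀ i, 0 ≤ P i) (hP1 : ∑ i, P i = 1) {u : ℝ → ℝ} {L : ℝ}
    (hL : ∀ x y, |u x - u y| ≤ L * |x - y|) (n : ℕ) (x y : ℝ) :
    |(stepAvg P a)^[n] u x - (stepAvg P a)^[n] u y| ≤ L * |x - y| := by
  induction n generalizing x y with
  | zero => exact hL x y
  | succ n ih =>
    rw [Function.iterate_succ_apply']
    refine abs_stepAvg_sub_le hP hP1 fun i => ?_
    simpa using ih (x - a i) (y - a i)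

lemma iterate_nonneg (hP : ∀ i, 0 ≤ P i) {v : ℝ → ℝ} (hv : ∀ x, 0 ≤ v x) (n : ℕ) (x : ℝ) :
    0 ≤ (stepAvg P a)^[n] v x := by
  induction n generalizing x with
  | zero => exact hv x
  | succ n ih =>
    rw [Function.iterate_succ_apply']
    exact Finset.sum_nonneg fun i _ => mul_nonneg (hP i) (ih _)

/-- Bound for a harmonic function `u` by its integral over a window. After `n` steps the walk,
smoothed by a Gaussian of width `η`, has a density bounded by `S`; the walk leaves the window of
radius `B` around its mean with the probability given by Chebyshev's inequality, and the smoothing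
costs `L * η` up to a constant. -/
lemma harmonic_le_integral {A : ℝ} (hA : 0 ≤ A) (haA : ∀ i, a i ≤ A) (hP : ∀ i, 0 ≤ P i)
    (hP1 : ∑ i, P i = 1) {u : ℝ → ℝ} (hc : Continuous u) (hu01 : ∀ x, 0 ≤ u x ∧ u x ≤ 1)
    {K L : ℝ} (hL : ∀ x y, |u x - u y| ≤ L * |x - y|)
    (hu : ∀ x, K ≤ x → u x = stepAvg P a u x) (n : ℕ) {s : ℝ} (hs : K ≤ s - n * A)
    {η : ℝ} (hη : 0 < η) {S : ℝ} (hS : ∀ x, (stepAvg P a)^[n] (gaussK η) x ≤ S)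
    {B : ℝ} (hB : 0 < B) :
    u s ≤ S * (∫ x in (s - n * (∑ i, P i * a i) - B)..(s - n * (∑ i, P i * a i) + B), u x)
      + (η ^ 2 * gaussM2 + n * ∑ i, P i * (a i - ∑ j, P j * a j) ^ 2) / B ^ 2
      + L * (η * gaussM1) := by
  set m := ∑ j, P j * a j with hm
  set σ := ∑ i, P i * (a i - m) ^ 2 with hσ
  set ρ := (stepAvg P a)^[n] (gaussK η) with hρ
  have hρ0 : ∀ x, 0 ≤ ρ x := fun x => iterate_nonneg hP (gaussK_nonneg hη) n x
  have hS0 : 0 ≤ S := (hρ0 0).trans (hS 0)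
  have t1 : TransInt (fun x => u (s - x)) (gaussK η) := by
    refine integrable_mul_gaussK hη (by fun_prop) zero_le_one fun x => ?_
    rw [abs_of_nonneg (hu01 _).1]
    nlinarith [(hu01 (s - x)).2, sq_nonneg x]
  have t2 : TransInt (fun x => (x - n * m) ^ 2) (gaussK η) := by
    refine integrable_mul_gaussK hη (by fun_prop) (C := 2 + 2 * (n * m) ^ 2) (by positivity)
      fun x => ?_
    rw [abs_of_nonneg (sq_nonneg _)]
    nlinarith [sq_nonneg (x + n * m), sq_nonneg (n * m * x), sq_nonneg x, sq_nonneg (n * m)]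
  have iK : Integrable (gaussK η) := by
    have := integrable_mul_gaussK (ψ := fun _ => 1) hη (by fun_prop) zero_le_one
      (fun x => by rw [abs_one]; nlinarith [sq_nonneg x]) 0
    simpa using this
  have iA : Integrable fun x => |x| * gaussK η x := by
    have := integrable_mul_gaussK (ψ := fun x => |x|) hη (by fun_prop) zero_le_one
      (fun x => by rw [abs_abs, one_mul]; nlinarith [sq_nonneg (|x| - 1), sq_abs x, abs_nonneg x]) 0
    simpa using this
  have iS : Integrable fun x => x ^ 2 * gaussK η x := by
    have := integrable_mul_gaussK (ψ := fun x => x ^ 2) hη (by fun_prop) zero_le_one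
      (fun x => by rw [abs_of_nonneg (sq_nonneg _)]; linarith) 0
    simpa using this
  have iU : Integrable fun x => (stepAvg P a)^[n] u (s - x) * gaussK η x := by
    have : ∀ k, TransInt ((stepAvg P (fun i => -a i))^[k] (fun x => u (s - x))) (gaussK η) := by
      intro k
      induction k with
      | zero => exact t1
      | succ k ih => rw [Function.iterate_succ_apply']; exact ih.stepAvg_left
    refine (this n).integrable.congr (Eventually.of_forall fun x => ?_)
    simp only [iterate_reflect]
  have step1 : u s ≤ (∫ x, u (s - x) * ρ x) + L * (η * gaussM1) := by
    rw [hρ, integral_mul_iterate n t1]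
    simp only [iterate_reflect]
    rw [← integral_abs_mul_gaussK hη, ← integral_const_mul, ← integral_add iU (iA.const_mul L)]
    have : u s = ∫ x, u s * gaussK η x := by rw [integral_const_mul, integral_gaussK hη, mul_one]
    rw [this]
    refine integral_mono (iK.const_mul _) (iU.add (iA.const_mul L)) fun x => ?_
    have h1 := (abs_le.mp (iterate_lipschitz (a := a) hP hP1 hL n s (s - x))).2
    rw [iterate_harmonic hA haA hu n s hs, show s - (s - x) = x by ring] at h1
    have := mul_le_mul_of_nonneg_right h1 (gaussK_nonneg hη x)
    simp only
    linarith
  have step2 : ∫ x, (x - n * m) ^ 2 * ρ x = η ^ 2 * gaussM2 + n * σ := by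
    rw [hρ, integral_mul_iterate n t2]
    simp only [iterate_sq hP1, ← hm, ← hσ, sub_add_cancel, add_mul]
    rw [integral_add iS (iK.const_mul _), integral_sq_mul_gaussK hη, integral_const_mul,
      integral_gaussK hη, mul_one]
  have iI : Integrable ((Icc (n * m - B) (n * m + B)).indicator fun x => S * u (s - x)) := by
    rw [integrable_indicator_iff measurableSet_Icc]
    exact (by fun_prop : Continuous fun x => S * u (s - x)).continuousOn.integrableOn_Icc
  have step3 : ∫ x, u (s - x) * ρ x ≤
      S * (∫ x in (s - n * m - B)..(s - n * m + B), u x) + (η ^ 2 * gaussM2 + n * σ) / B ^ 2 := by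
    have e1 : ∫ x, (Icc (n * m - B) (n * m + B)).indicator (fun x => S * u (s - x)) x =
        S * (∫ x in (s - n * m - B)..(s - n * m + B), u x) := by
      rw [integral_indicator measurableSet_Icc, integral_Icc_eq_integral_Ioc,
        ← intervalIntegral.integral_of_le (by linarith), intervalIntegral.integral_const_mul,
        intervalIntegral.integral_comp_sub_left]
      congr 2 <;> ring
    rw [← e1, ← step2, ← integral_div,
      ← integral_add iI ((t2.iterate_right n).integrable.div_const _)]
    refine integral_mono (t1.iterate_right n).integrable
      (iI.add ((t2.iterate_right n).integrable.div_const _)) fun x => ?_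
    simp only
    by_cases hx : x ∈ Icc (n * m - B) (n * m + B)
    · rw [indicator_of_mem hx]
      have h1 := mul_le_mul_of_nonneg_left (hS x) (hu01 (s - x)).1
      have h2 : 0 ≤ (x - n * m) ^ 2 * ρ x / B ^ 2 :=
        div_nonneg (mul_nonneg (sq_nonneg _) (hρ0 x)) (sq_nonneg _)
      change u (s - x) * ρ x ≤ _
      linarith
    · rw [indicator_of_notMem hx, zero_add]
      have hsq : B ^ 2 ≤ (x - n * m) ^ 2 := by
        rw [mem_Icc, not_and_or, not_le, not_le] at hx
        rcases hx with hx | hx <;> nlinarith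
      rw [le_div_iff₀ (by positivity)]
      have h1 := mul_le_mul_of_nonneg_right (hu01 (s - x)).2 (hρ0 x)
      have h2 := mul_le_mul_of_nonneg_right hsq (hρ0 x)
      have h3 := mul_le_mul_of_nonneg_right h1 (sq_nonneg B)
      change u (s - x) * ρ x * B ^ 2 ≤ (x - n * m) ^ 2 * ρ x
      linarith
  linarith

end Smoothing

/-! ### Density of the walk under the Diophantine condition -/

section Density

variable {ι : Type*} [Fintype ι] {P a : ι → ℝ}

/-- The characteristic function of one step of the walk. -/
def stepChar (P a : ι → ℝ) (ξ : ℝ) : ℂ :=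
  ∑ i, (P i : ℂ) * Complex.exp ((2 * Real.pi * (ξ * a i) : ℝ) * Complex.I)

lemma norm_stepChar_le_one (hP : ∀ i, 0 ≤ P i) (hP1 : ∑ i, P i = 1) (ξ : ℝ) :
    ‖stepChar P a ξ‖ ≤ 1 := by
  unfold stepChar
  refine (norm_sum_le _ _).trans ?_
  simp only [norm_mul, Complex.norm_exp_ofReal_mul_I, mul_one, Complex.norm_real,
    Real.norm_eq_abs]
  rw [← hP1]
  exact Finset.sum_le_sum fun i _ => (abs_of_nonneg (hP i)).le

/-- A non-concentration of the phases `ξ * a i` modulo `1` pushes `stepChar` away from modulus `1`.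
The free shift `y` absorbs the argument of the sum. -/
lemma norm_stepChar_le (hP : ∀ i, 0 ≤ P i) (hP1 : ∑ i, P i = 1) {π₀ : ℝ}
    (hπ₀ : ∀ i, π₀ ≤ P i) {ξ d : ℝ} (hd : 0 ≤ d)
    (h : ∀ y : ℝ, ∃ i, d ≤ |ξ * a i + y - round (ξ * a i + y)|) :
    ‖stepChar P a ξ‖ ≤ Real.exp (-(8 * π₀ * d ^ 2)) := by
  set z := stepChar P a ξ with hz
  set y : ℝ := -z.arg / (2 * Real.pi) with hy
  have hnorm : ‖z‖ = ∑ i, P i * Real.cos (2 * Real.pi * (ξ * a i + y)) := by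
    have h1 : (‖z‖ : ℂ) = z * Complex.exp ((-z.arg : ℝ) * Complex.I) := by
      conv_rhs => rw [← Complex.norm_mul_exp_arg_mul_I z]
      rw [mul_assoc, ← Complex.exp_add]
      simp
    have h2 : z * Complex.exp ((-z.arg : ℝ) * Complex.I) =
        ∑ i, (P i : ℂ) * Complex.exp ((2 * Real.pi * (ξ * a i + y) : ℝ) * Complex.I) := by
      rw [hz, stepChar, Finset.sum_mul, ← stepChar, ← hz]
      refine Finset.sum_congr rfl fun i _ => ?_
      rw [mul_assoc, ← Complex.exp_add, ← add_mul, ← Complex.ofReal_add]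
      congr 4
      rw [hy]
      field_simp
    have h3 := congrArg Complex.re (h1.trans h2)
    rw [Complex.ofReal_re, Complex.re_sum] at h3
    rw [h3]
    refine Finset.sum_congr rfl fun i _ => ?_
    rw [Complex.re_ofReal_mul, Complex.exp_ofReal_mul_I_re]
  have hcos : ∀ θ : ℝ, Real.cos (2 * Real.pi * θ) ≤ 1 - 8 * |θ - round θ| ^ 2 := by
    intro θ
    have h1 : Real.cos (2 * Real.pi * θ) = Real.cos (2 * Real.pi * (θ - round θ)) := by
      rw [← Real.cos_sub_int_mul_two_pi _ (round θ)]
      congr 1; ring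
    have h2 := abs_sub_round θ
    rw [h1]
    refine (Real.cos_le_one_sub_mul_cos_sq ?_).trans (le_of_eq ?_)
    · rw [abs_mul, abs_of_pos Real.two_pi_pos]
      nlinarith [Real.pi_pos]
    · rw [sq_abs]
      field_simp
      ring
  obtain ⟨i₀, hi₀⟩ := h y
  have hone : ‖z‖ ≤ 1 - 8 * π₀ * d ^ 2 := by
    rw [hnorm]
    classical
    have e1 : ∑ i, P i * Real.cos (2 * Real.pi * (ξ * a i + y)) ≤
        ∑ i, (P i - if i = i₀ then 8 * π₀ * d ^ 2 else 0) := by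
      refine Finset.sum_le_sum fun i _ => ?_
      split_ifs with hi
      · subst hi
        have h1 := mul_le_mul_of_nonneg_left (hcos (ξ * a i + y)) (hP i)
        have h2 : d ^ 2 ≤ |ξ * a i + y - round (ξ * a i + y)| ^ 2 := by gcongr
        have h3 : π₀ * d ^ 2 ≤ P i * |ξ * a i + y - round (ξ * a i + y)| ^ 2 :=
          mul_le_mul (hπ₀ i) h2 (by positivity) (hP i)
        linarith
      · have := mul_le_of_le_one_right (hP i) (Real.cos_le_one (2 * Real.pi * (ξ * a i + y)))
        linarith
    refine e1.trans (le_of_eq ?_)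
    rw [Finset.sum_sub_distrib, hP1]
    simp
  have := Real.add_one_le_exp (-(8 * π₀ * d ^ 2))
  linarith

/-- The Diophantine lower bound at one large frequency propagates linearly to small ones, by passing
to an integer multiple of the frequency. -/
lemma dio_small {ι : Type*} [Nonempty ι] {a : ι → ℝ} {l C₀ X : ℝ}
    (hl : 0 < l) (hC₀ : 0 < C₀) (hX : 0 < X)
    (h : ∀ x : ℝ, X ≤ |x| → ∀ y : ℝ, ∃ i, C₀ * |x| ^ (-l) ≤
      |x * a i + y - round (x * a i + y)|) {ξ : ℝ} (hξ : |ξ| ≤ X) (y : ℝ) :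
    ∃ i, C₀ * (2 * X) ^ (-l) / (2 * X) * |ξ| ≤ |ξ * a i + y - round (ξ * a i + y)| := by
  rcases eq_or_ne ξ 0 with rfl | h0
  · exact ⟨Classical.arbitrary ι, by simp⟩
  have hpos : 0 < |ξ| := abs_pos.mpr h0
  set M := ⌈X / |ξ|⌉₊ with hM
  have hM1 : X ≤ M * |ξ| := by rw [← div_le_iff₀ hpos]; exact Nat.le_ceil _
  have hM2 : M * |ξ| ≤ 2 * X := by
    have := (Nat.ceil_lt_add_one (div_nonneg hX.le hpos.le)).le
    rw [← hM] at this
    have := mul_le_mul_of_nonneg_right this hpos.le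
    rw [add_mul, div_mul_cancel₀ _ hpos.ne'] at this
    linarith
  have hMpos : (0 : ℝ) < M := pos_of_mul_pos_left (hX.trans_le hM1) hpos.le
  have habs : |(M : ℝ) * ξ| = M * |ξ| := by rw [abs_mul, Nat.abs_cast]
  obtain ⟨i, hi⟩ := h (M * ξ) (by rw [habs]; exact hM1) (M * y)
  refine ⟨i, ?_⟩
  set D := |ξ * a i + y - round (ξ * a i + y)| with hD
  have h1 : |(M : ℝ) * ξ * a i + M * y - round ((M : ℝ) * ξ * a i + M * y)| ≤ M * D := by
    refine (round_le _ ((M : ℤ) * round (ξ * a i + y))).trans (le_of_eq ?_)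
    rw [hD, ← Nat.abs_cast M, ← abs_mul, Nat.abs_cast]
    congr 1
    push_cast
    ring
  have h2 : (2 * X) ^ (-l) ≤ |(M : ℝ) * ξ| ^ (-l) := by
    rw [habs]
    exact Real.rpow_le_rpow_of_nonpos (by positivity) hM2 (by linarith)
  have h3 : C₀ * (2 * X) ^ (-l) ≤ M * D :=
    (mul_le_mul_of_nonneg_left h2 hC₀.le).trans (hi.trans h1)
  have hD0 : 0 ≤ D := abs_nonneg _
  rw [div_mul_eq_mul_div, div_le_iff₀ (by positivity)]
  calc C₀ * (2 * X) ^ (-l) * |ξ| ≤ M * D * |ξ| := mul_le_mul_of_nonneg_right h3 hpos.le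
    _ = D * (M * |ξ|) := by ring
    _ ≤ D * (2 * X) := mul_le_mul_of_nonneg_left hM2 hD0

lemma gaussK_eq_integral {η : ℝ} (hη : 0 < η) (x : ℝ) :
    (gaussK η x : ℂ) = ∫ ξ : ℝ, (Real.exp (-Real.pi * η ^ 2 * ξ ^ 2) : ℂ) *
      Complex.exp ((2 * Real.pi * (x * ξ) : ℝ) * Complex.I) := by
  have hb : 0 < ((Real.pi * η ^ 2 : ℝ) : ℂ).re := by rw [Complex.ofReal_re]; positivity
  have := fourierIntegral_gaussian hb ((2 * Real.pi * x : ℝ) : ℂ)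
  have e : ∀ ξ : ℝ, (Real.exp (-Real.pi * η ^ 2 * ξ ^ 2) : ℂ) *
      Complex.exp ((2 * Real.pi * (x * ξ) : ℝ) * Complex.I) =
      Complex.exp (Complex.I * ((2 * Real.pi * x : ℝ) : ℂ) * ξ) *
      Complex.exp (-((Real.pi * η ^ 2 : ℝ) : ℂ) * ξ ^ 2) := by
    intro ξ
    rw [Complex.ofReal_exp, mul_comm]
    congr 2
    · push_cast; ring
    · push_cast; ring
  simp only [e]
  rw [this]
  have e2 : ((Real.pi : ℂ) / ((Real.pi * η ^ 2 : ℝ) : ℂ)) ^ (1 / 2 : ℂ) = ((η⁻¹ : ℝ) : ℂ) := by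
    have : ((Real.pi : ℂ) / ((Real.pi * η ^ 2 : ℝ) : ℂ)) = ((η⁻¹ ^ 2 : ℝ) : ℂ) := by
      rw [← Complex.ofReal_div]
      congr 1
      field_simp
    rw [this, show (1 / 2 : ℂ) = ((1 / 2 : ℝ) : ℂ) by push_cast; rfl,
      ← Complex.ofReal_cpow (by positivity), ← Real.sqrt_eq_rpow, Real.sqrt_sq (by positivity)]
  rw [e2, gaussK, Complex.ofReal_mul, Complex.ofReal_exp]
  congr 2
  push_cast
  have : (η : ℂ) ≠ 0 := by exact_mod_cast hη.ne'
  have : (Real.pi : ℂ) ≠ 0 := by exact_mod_cast Real.pi_ne_zero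
  field_simp
  ring

lemma continuous_stepChar : Continuous (stepChar P a) := by
  unfold stepChar; fun_prop

lemma integrable_iterate_aux (hP : ∀ i, 0 ≤ P i) (hP1 : ∑ i, P i = 1) {η : ℝ} (hη : 0 < η)
    (n : ℕ) (x : ℝ) :
    Integrable fun ξ : ℝ => (Real.exp (-Real.pi * η ^ 2 * ξ ^ 2) : ℂ) * stepChar P a (-ξ) ^ n *
      Complex.exp ((2 * Real.pi * (x * ξ) : ℝ) * Complex.I) := by
  have hg : Integrable fun ξ : ℝ => Real.exp (-(Real.pi * η ^ 2) * ξ ^ 2) :=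
    integrable_exp_neg_mul_sq (by positivity)
  have hcont := continuous_stepChar (P := P) (a := a)
  refine hg.mono' (by fun_prop) (Eventually.of_forall fun ξ => ?_)
  rw [norm_mul, norm_mul, Complex.norm_exp_ofReal_mul_I, mul_one, Complex.norm_real,
    Real.norm_eq_abs, abs_of_pos (Real.exp_pos _), norm_pow, ← neg_mul]
  exact mul_le_of_le_one_right (Real.exp_pos _).le
    (pow_le_one₀ (norm_nonneg _) (norm_stepChar_le_one hP hP1 _))

lemma iterate_gaussK_eq_integral (hP : ∀ i, 0 ≤ P i) (hP1 : ∑ i, P i = 1) {η : ℝ} (hη : 0 < η)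
    (n : ℕ) (x : ℝ) :
    ((stepAvg P a)^[n] (gaussK η) x : ℂ) =
      ∫ ξ : ℝ, (Real.exp (-Real.pi * η ^ 2 * ξ ^ 2) : ℂ) * stepChar P a (-ξ) ^ n *
        Complex.exp ((2 * Real.pi * (x * ξ) : ℝ) * Complex.I) := by
  induction n generalizing x with
  | zero => simpa using gaussK_eq_integral hη x
  | succ n ih =>
    rw [Function.iterate_succ_apply']
    simp only [stepAvg, Complex.ofReal_sum, Complex.ofReal_mul]
    have : ∀ i, (P i : ℂ) * ((stepAvg P a)^[n] (gaussK η) (x - a i) : ℂ) =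
        ∫ ξ : ℝ, (P i : ℂ) * ((Real.exp (-Real.pi * η ^ 2 * ξ ^ 2) : ℂ) * stepChar P a (-ξ) ^ n *
          Complex.exp ((2 * Real.pi * ((x - a i) * ξ) : ℝ) * Complex.I)) := by
      intro i
      rw [ih, integral_const_mul]
    rw [Finset.sum_congr rfl fun i _ => this i, ← integral_finsetSum _ fun i _ =>
      (integrable_iterate_aux hP hP1 hη n (x - a i)).const_mul _]
    congr 1
    ext ξ
    have hsc : stepChar P a (-ξ) =
      ∑ i, (P i : ℂ) * Complex.exp ((2 * Real.pi * (-ξ * a i) : ℝ) * Complex.I) := rfl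
    rw [pow_succ (stepChar P a (-ξ)) n]
    nth_rewrite 3 [hsc]
    rw [Finset.mul_sum, Finset.mul_sum, Finset.sum_mul]
    refine Finset.sum_congr rfl fun i _ => ?_
    have : Complex.exp ((2 * Real.pi * ((x - a i) * ξ) : ℝ) * Complex.I) =
        Complex.exp ((2 * Real.pi * (-ξ * a i) : ℝ) * Complex.I) *
        Complex.exp ((2 * Real.pi * (x * ξ) : ℝ) * Complex.I) := by
      rw [← Complex.exp_add]
      congr 1
      push_cast
      ring
    rw [this]
    push_cast
    ring

lemma rpow_le_mul_exp {j z : ℝ} (hj : 0 < j) (hz : 0 ≤ z) : z ^ j ≤ j ^ j * Real.exp z := by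
  have h1 : z / j ≤ Real.exp (z / j) := by linarith [Real.add_one_le_exp (z / j)]
  have h2 := Real.rpow_le_rpow (by positivity) h1 hj.le
  rw [← Real.exp_mul, div_mul_cancel₀ _ hj.ne', Real.div_rpow hz hj.le,
    div_le_iff₀ (by positivity)] at h2
  linarith

/-- After `n` steps, the walk smoothed at scale `n ^ (-κ)` has density of order `n ^ (-1/2)`. -/
lemma exists_density_bound [Nonempty ι] (hP : ∀ i, 0 ≤ P i) (hP1 : ∑ i, P i = 1) {π₀ : ℝ}
    (hπ₀ : ∀ i, π₀ ≤ P i) (hπ₀' : 0 < π₀) {l C₀ X : ℝ} (hl : 0 < l) (hC₀ : 0 < C₀) (hX : 0 < X)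
    (h : ∀ x : ℝ, X ≤ |x| → ∀ y : ℝ, ∃ i, C₀ * |x| ^ (-l) ≤
      |x * a i + y - round (x * a i + y)|) :
    ∃ C κ : ℝ, 0 < C ∧ 0 < κ ∧ κ ≤ 1 / 4 ∧ ∀ n : ℕ, 1 ≤ n → ∀ x,
      (stepAvg P a)^[n] (gaussK ((n : ℝ) ^ (-κ))) x ≤ C * (n : ℝ) ^ (-(1 / 2) : ℝ) := by
  set cs := C₀ * (2 * X) ^ (-l) / (2 * X) with hcs
  have hcs0 : 0 < cs := by positivity
  set c1 := 8 * π₀ * cs ^ 2 with hc1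
  set c2 := 8 * π₀ * C₀ ^ 2 with hc2
  have hc10 : 0 < c1 := by positivity
  have hc20 : 0 < c2 := by positivity
  set κ := 1 / (4 * (l + 1)) with hκ
  set j := 2 * l + 1 with hj
  have hj0 : 0 < j := by positivity
  set D := c2 ^ 2 * Real.pi ^ j with hD
  have hD0 : 0 < D := by positivity
  set C3 := 4 * j ^ j / D * (1 + (X ^ 2)⁻¹) with hC3
  have hC30 : 0 < C3 := by positivity
  refine ⟨√(Real.pi / c1) + C3 * Real.pi, κ, by positivity, by positivity, ?_, ?_⟩
  · rw [hκ]
    exact one_div_le_one_div_of_le (by norm_num) (by linarith)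
  intro n hn x
  have hn1 : (1 : ℝ) ≤ n := by exact_mod_cast hn
  have hn0 : (0 : ℝ) < n := by linarith
  set η := (n : ℝ) ^ (-κ) with hη
  have hη0 : 0 < η := by positivity
  have hηj : (n : ℝ)⁻¹ ≤ (η ^ 2) ^ j := by
    rw [hη, ← Real.rpow_natCast, ← Real.rpow_mul hn0.le, ← Real.rpow_mul hn0.le,
      ← Real.rpow_neg_one]
    refine Real.rpow_le_rpow_of_exponent_le hn1 ?_
    have : κ * 2 * j ≤ 1 := by
      rw [hκ, hj, div_mul_eq_mul_div, div_mul_eq_mul_div, div_le_one (by positivity)]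
      linarith
    push_cast
    linarith
  -- pointwise bound: the Gaussian part comes from small frequencies, the tail from large ones
  have hpt : ∀ ξ : ℝ, Real.exp (-Real.pi * η ^ 2 * ξ ^ 2) * ‖stepChar P a (-ξ)‖ ^ n ≤
      Real.exp (-(c1 * n) * ξ ^ 2) + C3 * (n : ℝ)⁻¹ * (1 + ξ ^ 2)⁻¹ := by
    intro ξ
    rcases le_total |ξ| X with hξ | hξ
    · have h1 := norm_stepChar_le (ξ := -ξ) hP hP1 hπ₀ (d := cs * |ξ|) (by positivity)
        (fun y => by
          have := dio_small hl hC₀ hX h (ξ := -ξ) (by rwa [abs_neg]) y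
          rwa [abs_neg] at this)
      have h2 : ‖stepChar P a (-ξ)‖ ^ n ≤ Real.exp (-(c1 * n) * ξ ^ 2) := by
        refine (pow_le_pow_left₀ (norm_nonneg _) h1 n).trans (le_of_eq ?_)
        rw [← Real.exp_nat_mul, mul_pow, sq_abs]
        congr 1
        rw [hc1]; ring
      have h3 : Real.exp (-Real.pi * η ^ 2 * ξ ^ 2) ≤ 1 := by
        rw [Real.exp_le_one_iff]
        have : 0 ≤ Real.pi * η ^ 2 * ξ ^ 2 := by positivity
        linarith
      have h4 : 0 ≤ C3 * (n : ℝ)⁻¹ * (1 + ξ ^ 2)⁻¹ := by positivity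
      have h5 := mul_le_of_le_one_left (pow_nonneg (norm_nonneg (stepChar P a (-ξ))) n) h3
      linarith
    · have ht : 0 < |ξ| := hX.trans_le hξ
      set t := |ξ| with htdef
      have h1 := norm_stepChar_le (ξ := -ξ) hP hP1 hπ₀ (d := C₀ * t ^ (-l))
        (by positivity) (fun y => by
          have := h (-ξ) (by rwa [abs_neg]) y
          rwa [abs_neg] at this)
      set T := t ^ (-l) with hT
      set z := c2 * n * T ^ 2 with hz
      set w := Real.pi * η ^ 2 * t ^ 2 with hw
      have hz0 : 0 ≤ z := by positivity
      have hw0 : 0 ≤ w := by positivity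
      have h2 : ‖stepChar P a (-ξ)‖ ^ n ≤ Real.exp (-z) := by
        refine (pow_le_pow_left₀ (norm_nonneg _) h1 n).trans (le_of_eq ?_)
        rw [← Real.exp_nat_mul]
        congr 1
        rw [hz, hc2]; ring
      have h3 : -Real.pi * η ^ 2 * ξ ^ 2 = -w := by rw [hw, htdef, sq_abs]; ring
      have hTt : T ^ 4 * (t ^ 2) ^ j = t ^ 2 := by
        rw [hT, ← Real.rpow_natCast, ← Real.rpow_natCast, ← Real.rpow_mul ht.le,
          ← Real.rpow_mul ht.le, ← Real.rpow_add ht]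
        congr 1
        push_cast
        rw [hj]; ring
      have h4 : D * n * t ^ 2 ≤ z ^ 2 * w ^ j := by
        have e : z ^ 2 * w ^ j = D * t ^ 2 * (n ^ 2 * (η ^ 2) ^ j) := by
          rw [hw, Real.mul_rpow (by positivity) (by positivity),
            Real.mul_rpow Real.pi_pos.le (by positivity), hz, hD]
          calc _ = c2 ^ 2 * Real.pi ^ j * (T ^ 4 * (t ^ 2) ^ j) * (n ^ 2 * (η ^ 2) ^ j) := by ring
            _ = _ := by rw [hTt]
        rw [e]
        have : (n : ℝ) ≤ n ^ 2 * (η ^ 2) ^ j := by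
          calc (n : ℝ) = n ^ 2 * (n : ℝ)⁻¹ := by field_simp
            _ ≤ _ := mul_le_mul_of_nonneg_left hηj (by positivity)
        calc D * n * t ^ 2 = D * t ^ 2 * n := by ring
          _ ≤ _ := mul_le_mul_of_nonneg_left this (by positivity)
      have h5 : z ^ 2 * w ^ j ≤ 4 * j ^ j * Real.exp (z + w) := by
        have e1 := rpow_le_mul_exp (j := 2) two_pos hz0
        have e2 := rpow_le_mul_exp hj0 hw0
        rw [Real.rpow_two, Real.rpow_two] at e1
        rw [Real.exp_add]
        calc z ^ 2 * w ^ j ≤ (2 ^ 2 * Real.exp z) * (j ^ j * Real.exp w) :=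
              mul_le_mul e1 e2 (by positivity) (by positivity)
          _ = _ := by ring
      have h6 : Real.exp (-w) * Real.exp (-z) ≤ 4 * j ^ j / (D * n * t ^ 2) := by
        rw [← Real.exp_add, show -w + -z = -(z + w) by ring, Real.exp_neg,
          le_div_iff₀ (by positivity), inv_mul_le_iff₀ (Real.exp_pos _)]
        linarith
      have h7 : (t ^ 2)⁻¹ ≤ (1 + (X ^ 2)⁻¹) * (1 + ξ ^ 2)⁻¹ := by
        rw [← sq_abs ξ, ← htdef, ← div_eq_mul_inv, le_div_iff₀ (by positivity), mul_add, mul_one,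
          inv_mul_cancel₀ (by positivity)]
        have : (t ^ 2)⁻¹ ≤ (X ^ 2)⁻¹ := by
          apply inv_anti₀ (by positivity)
          gcongr
        linarith
      rw [h3]
      calc Real.exp (-w) * ‖stepChar P a (-ξ)‖ ^ n ≤ Real.exp (-w) * Real.exp (-z) :=
            mul_le_mul_of_nonneg_left h2 (Real.exp_pos _).le
        _ ≤ 4 * j ^ j / (D * n * t ^ 2) := h6
        _ = 4 * j ^ j / D * (n : ℝ)⁻¹ * (t ^ 2)⁻¹ := by field_simp
        _ ≤ 4 * j ^ j / D * (n : ℝ)⁻¹ * ((1 + (X ^ 2)⁻¹) * (1 + ξ ^ 2)⁻¹) :=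
            mul_le_mul_of_nonneg_left h7 (by positivity)
        _ = C3 * (n : ℝ)⁻¹ * (1 + ξ ^ 2)⁻¹ := by rw [hC3]; ring
        _ ≤ _ := by linarith [Real.exp_pos (-(c1 * n) * ξ ^ 2)]
  have hI1 : Integrable fun ξ : ℝ => Real.exp (-(c1 * n) * ξ ^ 2) :=
    integrable_exp_neg_mul_sq (by positivity)
  have hI2 : Integrable fun ξ : ℝ => C3 * (n : ℝ)⁻¹ * (1 + ξ ^ 2)⁻¹ :=
    integrable_inv_one_add_sq.const_mul _
  have hnorm : ∀ ξ : ℝ, ‖(Real.exp (-Real.pi * η ^ 2 * ξ ^ 2) : ℂ) * stepChar P a (-ξ) ^ n *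
      Complex.exp ((2 * Real.pi * (x * ξ) : ℝ) * Complex.I)‖ =
      Real.exp (-Real.pi * η ^ 2 * ξ ^ 2) * ‖stepChar P a (-ξ)‖ ^ n := by
    intro ξ
    rw [norm_mul, norm_mul, Complex.norm_exp_ofReal_mul_I, mul_one, Complex.norm_real,
      Real.norm_eq_abs, abs_of_pos (Real.exp_pos _), norm_pow]
  calc (stepAvg P a)^[n] (gaussK η) x ≤ ‖((stepAvg P a)^[n] (gaussK η) x : ℂ)‖ := by
        rw [Complex.norm_real]; exact le_abs_self _
    _ ≤ ∫ ξ : ℝ, (Real.exp (-(c1 * n) * ξ ^ 2) + C3 * (n : ℝ)⁻¹ * (1 + ξ ^ 2)⁻¹) := by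
        rw [iterate_gaussK_eq_integral hP hP1 hη0]
        refine norm_integral_le_of_norm_le (hI1.add hI2) (Eventually.of_forall fun ξ => ?_)
        rw [hnorm]
        exact hpt ξ
    _ = √(Real.pi / (c1 * n)) + C3 * (n : ℝ)⁻¹ * Real.pi := by
        rw [integral_add hI1 hI2, integral_gaussian, integral_const_mul,
          integral_univ_inv_one_add_sq]
    _ ≤ (√(Real.pi / c1) + C3 * Real.pi) * (n : ℝ) ^ (-(1 / 2) : ℝ) := by
        have e1 : √(Real.pi / (c1 * n)) = √(Real.pi / c1) * (n : ℝ) ^ (-(1 / 2) : ℝ) := by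
          rw [← div_div, Real.sqrt_div' _ hn0.le, Real.rpow_neg hn0.le, ← Real.sqrt_eq_rpow]
          rfl
        have e2 : (n : ℝ)⁻¹ ≤ (n : ℝ) ^ (-(1 / 2) : ℝ) := by
          rw [← Real.rpow_neg_one]
          exact Real.rpow_le_rpow_of_exponent_le hn1 (by norm_num)
        rw [e1, add_mul]
        have := mul_le_mul_of_nonneg_left e2 (mul_nonneg hC30.le Real.pi_pos.le)
        linarith

end Density

/-! ### Regularity of self-similar measures -/

section Regularity

variable {ι : Type*} [Fintype ι] {P r t : ι → ℝ} {ν : Measure ℝ} [IsProbabilityMeasure ν]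

/-- A self-similar measure lives on any compact interval that the maps preserve: mass far away is
dominated by mass still further away. -/
lemma ae_mem_Icc_of_selfSimilar (hP : ∀ i, 0 ≤ P i) (hP1 : ∑ i, P i = 1)
    (hself : ∀ B, MeasurableSet B →
      ν.real B = ∑ i, P i * ν.real ((fun x => r i * x + t i) ⁻¹' B))
    {R : ℝ} (hR0 : 0 < R) (hR1 : R < 1) (hrR : ∀ i, |r i| ≤ R) {a b : ℝ} (hab : a < b)
    (hmaps : ∀ i, MapsTo (fun x => r i * x + t i) (Icc a b) (Icc a b)) :
    ∀ᵐ x ∂ν, x ∈ Icc a b := by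
  have hmapJ : ∀ i, ∀ D : ℝ, 0 ≤ D → ∀ x ∈ Icc (a - D / R) (b + D / R),
      r i * x + t i ∈ Icc (a - D) (b + D) := by
    intro i D hD x hx
    have hD' : 0 ≤ D / R := by positivity
    set w := max a (min b x) with hw
    have hwI : w ∈ Icc a b := ⟨le_max_left _ _, max_le hab.le (min_le_left _ _)⟩
    have hwx : |x - w| ≤ D / R := by
      rw [abs_le]
      obtain ⟨h1, h2⟩ := hx
      rcases le_total b x with h | h
      · rw [min_eq_left h, max_eq_right hab.le] at hw
        constructor <;> linarith
      · rw [min_eq_right h] at hw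
        rcases le_total a x with h' | h'
        · rw [max_eq_right h'] at hw
          constructor <;> linarith
        · rw [max_eq_left h'] at hw
          constructor <;> linarith
    have h1 := hmaps i hwI
    simp only [mem_Icc] at h1 ⊢
    have h2 : |r i * (x - w)| ≤ D := by
      rw [abs_mul]
      calc |r i| * |x - w| ≤ R * (D / R) := by
            gcongr
            exact hrR i
        _ = D := by field_simp
    rw [abs_le] at h2
    constructor <;> nlinarith [h1.1, h1.2, h2.1, h2.2]
  have hstep : ∀ D : ℝ, 0 ≤ D → ν.real (Icc (a - D / R) (b + D / R)) ≤ ν.real (Icc (a - D) (b + D)) := by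
    intro D hD
    rw [hself (Icc (a - D) (b + D)) measurableSet_Icc]
    calc ν.real (Icc (a - D / R) (b + D / R))
        = ∑ i, P i * ν.real (Icc (a - D / R) (b + D / R)) := by rw [← Finset.sum_mul, hP1, one_mul]
      _ ≤ _ := Finset.sum_le_sum fun i _ =>
          mul_le_mul_of_nonneg_left (measureReal_mono fun x hx => hmapJ i D hD x hx) (hP i)
  have hpow : ∀ D : ℝ, 0 ≤ D → ∀ k : ℕ,
      ν.real (Icc (a - D / R ^ k) (b + D / R ^ k)) ≤ ν.real (Icc (a - D) (b + D)) := by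
    intro D hD k
    induction k with
    | zero => simp
    | succ k ih =>
      have := hstep (D / R ^ k) (by positivity)
      rw [div_div, ← pow_succ] at this
      exact this.trans ih
  have hone : ∀ D : ℝ, 0 < D → ∀ᵐ x ∂ν, x ∈ Icc (a - D) (b + D) := by
    intro D hD
    have hmono : Monotone fun k : ℕ => Icc (a - D / R ^ k) (b + D / R ^ k) := by
      intro k k' hk
      have : D / R ^ k ≤ D / R ^ k' :=
        div_le_div_of_nonneg_left hD.le (by positivity) (pow_le_pow_of_le_one hR0.le hR1.le hk)
      exact Icc_subset_Icc (by linarith) (by linarith)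
    have hU : ⋃ k : ℕ, Icc (a - D / R ^ k) (b + D / R ^ k) = univ := by
      refine eq_univ_of_forall fun x => ?_
      obtain ⟨k, hk⟩ := exists_pow_lt_of_lt_one (show 0 < D / (|x| + |a| + |b| + 1) by positivity) hR1
      have hk' : |x| + |a| + |b| + 1 ≤ D / R ^ k := by
        rw [le_div_iff₀ (by positivity)]
        rw [lt_div_iff₀ (by positivity)] at hk
        linarith
      refine mem_iUnion.mpr ⟨k, ?_⟩
      have := abs_le.mp (le_refl |x|)
      have := abs_le.mp (le_refl |a|)
      have := abs_le.mp (le_refl |b|)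
      constructor <;> linarith
    have htend := tendsto_measure_iUnion_atTop (μ := ν) hmono
    rw [hU, measure_univ] at htend
    have htend' : Tendsto (fun k : ℕ => ν.real (Icc (a - D / R ^ k) (b + D / R ^ k))) atTop (𝓝 1) := by
      exact (ENNReal.tendsto_toReal ENNReal.one_ne_top).comp htend
    have h1 : 1 ≤ ν.real (Icc (a - D) (b + D)) := le_of_tendsto' htend' (hpow D hD.le)
    have h2 : ν.real (Icc (a - D) (b + D)) = 1 := le_antisymm measureReal_le_one h1
    rw [ae_iff]
    have h3 := probReal_compl_eq_one_sub (μ := ν) (measurableSet_Icc (a := a - D) (b := b + D))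
    rw [h2, sub_self, measureReal_eq_zero_iff] at h3
    exact h3
  have hall : ∀ᵐ x ∂ν, ∀ k : ℕ, x ∈ Icc (a - 1 / ((k : ℝ) + 1)) (b + 1 / ((k : ℝ) + 1)) :=
    ae_all_iff.mpr fun k => hone _ (by positivity)
  filter_upwards [hall] with x hx
  have hlim := tendsto_one_div_add_atTop_nhds_zero_nat (𝕜 := ℝ)
  constructor
  · have := (tendsto_const_nhds (x := a)).sub hlim
    rw [sub_zero] at this
    exact le_of_tendsto' this fun k => (hx k).1
  · have := (tendsto_const_nhds (x := b)).add hlim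
    rw [add_zero] at this
    exact ge_of_tendsto' this fun k => (hx k).2

/-- Unfolding the self-similarity `m` times along the constant word `i, …, i`, and bounding every
other branch by the worst ball. -/
lemma measure_ball_le_iterate (hP : ∀ i, 0 ≤ P i) (hP1 : ∑ i, P i = 1)
    (hself : ∀ B, MeasurableSet B →
      ν.real B = ∑ i, P i * ν.real ((fun x => r i * x + t i) ⁻¹' B))
    {ρ : ℝ} (hρ0 : 0 < ρ) (hρ1 : ρ ≤ 1) (hrρ : ∀ i, ρ ≤ |r i|) (i : ι) (m : ℕ) {S : ℝ} :
    ∀ x δ : ℝ, 0 ≤ δ → (∀ x', ν.real (Metric.closedBall x' (δ / ρ ^ m)) ≤ S) →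
      ν.real (Metric.closedBall x δ) ≤
        P i ^ m * ν.real ((fun x => r i * x + t i)^[m] ⁻¹' Metric.closedBall x δ) +
          (1 - P i ^ m) * S := by
  classical
  have hpre : ∀ j x δ, (fun x => r j * x + t j) ⁻¹' Metric.closedBall x δ =
      Metric.closedBall ((x - t j) / r j) (δ / |r j|) := by
    intro j x δ
    have hrj : 0 < |r j| := hρ0.trans_le (hrρ j)
    have hrj' : r j ≠ 0 := abs_pos.mp hrj
    ext w
    simp only [mem_preimage, Metric.mem_closedBall, Real.dist_eq]
    rw [le_div_iff₀ hrj, ← abs_mul, sub_mul, div_mul_cancel₀ _ hrj']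
    ring_nf
  induction m with
  | zero => intro x δ _ _; simp
  | succ m ih =>
    intro x δ hδ hS
    have hsub : ∀ j x', ∀ k : ℕ, k ≤ m → ν.real (Metric.closedBall x' (δ / |r j| / ρ ^ k)) ≤ S := by
      intro j x' k hk
      refine (measureReal_mono (Metric.closedBall_subset_closedBall ?_)).trans (hS x')
      rw [div_div]
      refine div_le_div_of_nonneg_left hδ (by positivity) ?_
      rw [pow_succ, mul_comm]
      exact mul_le_mul (hrρ j) (pow_le_pow_of_le_one hρ0.le hρ1 hk) (by positivity) (abs_nonneg _)
    have hother : ∀ j, ν.real ((fun x => r j * x + t j) ⁻¹' Metric.closedBall x δ) ≤ S := by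
      intro j
      rw [hpre]
      simpa using hsub j ((x - t j) / r j) 0 (Nat.zero_le _)
    have hmain := ih ((x - t i) / r i) (δ / |r i|) (by positivity) (fun x' => hsub i x' m le_rfl)
    rw [← hpre, ← preimage_comp] at hmain
    rw [hself _ Metric.isClosed_closedBall.measurableSet, ← Finset.add_sum_erase _ _ (Finset.mem_univ i)]
    have h1 : ∑ j ∈ Finset.univ.erase i, P j * ν.real ((fun x => r j * x + t j) ⁻¹' Metric.closedBall x δ)
        ≤ (1 - P i) * S := by
      have : 1 - P i = ∑ j ∈ Finset.univ.erase i, P j := by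
        rw [← hP1, ← Finset.add_sum_erase _ _ (Finset.mem_univ i)]; ring
      rw [this, Finset.sum_mul]
      exact Finset.sum_le_sum fun j _ => mul_le_mul_of_nonneg_left (hother j) (hP j)
    have h2 := mul_le_mul_of_nonneg_left hmain (hP i)
    rw [Function.iterate_succ']
    have h3 : P i ^ (m + 1) = P i * P i ^ m := pow_succ' _ _
    rw [h3]
    nlinarith

lemma iterate_affine_sub {r t y : ℝ} (hy : r * y + t = y) (m : ℕ) (w : ℝ) :
    (fun x => r * x + t)^[m] w - y = r ^ m * (w - y) := by
  induction m with
  | zero => simp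
  | succ m ih =>
    rw [Function.iterate_succ_apply', pow_succ', mul_assoc, ← ih]
    linear_combination hy

/-- Self-similar measures with two distinct fixed points have positive Frostman exponent. -/
lemma exists_frostman (hP : ∀ i, 0 < P i) (hP1 : ∑ i, P i = 1)
    (hself : ∀ B, MeasurableSet B →
      ν.real B = ∑ i, P i * ν.real ((fun x => r i * x + t i) ⁻¹' B))
    {ρ : ℝ} (hρ0 : 0 < ρ) (hrρ : ∀ i, ρ ≤ |r i|) (hr1 : ∀ i, |r i| < 1) {a b : ℝ} (hab : a < b)
    (hsupp : ∀ᵐ x ∂ν, x ∈ Icc a b) {i j : ι} {y z : ℝ} (hyI : y ∈ Icc a b) (hzI : z ∈ Icc a b)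
    (hy : r i * y + t i = y) (hz : r j * z + t j = z) (hyz : y ≠ z) :
    ∃ C c : ℝ, 0 < C ∧ 0 < c ∧ ∀ x δ : ℝ, 0 < δ →
      ν.real (Metric.closedBall x δ) ≤ C * δ ^ c := by
  have hP0 : ∀ i, 0 ≤ P i := fun i => (hP i).le
  have hρ1 : ρ < 1 := (hrρ i).trans_lt (hr1 i)
  set d := |y - z| with hd
  have hd0 : 0 < d := abs_pos.mpr (sub_ne_zero.mpr hyz)
  have hba : 0 < b - a := by linarith
  obtain ⟨m₁, hm₁⟩ := exists_pow_lt_of_lt_one (show 0 < d / (8 * (b - a)) by positivity) (hr1 i)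
  obtain ⟨m₂, hm₂⟩ := exists_pow_lt_of_lt_one (show 0 < d / (8 * (b - a)) by positivity) (hr1 j)
  set m := m₁ + m₂ + 1 with hm
  -- the `m`-fold images of the interval under the two maps are small sets around the fixed points
  have hsmall : ∀ k : ι, ∀ m' ≤ m, |r k| ^ m' < d / (8 * (b - a)) → ∀ v ∈ Icc a b,
      r k * v + t k = v → ∀ w ∈ Icc a b, |(fun x => r k * x + t k)^[m] w - v| ≤ d / 8 := by
    intro k m' hm' hlt v hv hfix w hw
    rw [iterate_affine_sub hfix, abs_mul, abs_pow]
    have h1 : |r k| ^ m ≤ d / (8 * (b - a)) :=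
      (pow_le_pow_of_le_one (abs_nonneg _) (hr1 k).le hm').trans hlt.le
    have h2 : |w - v| ≤ b - a := by
      rw [abs_le]; constructor <;> linarith [hw.1, hw.2, hv.1, hv.2]
    calc |r k| ^ m * |w - v| ≤ d / (8 * (b - a)) * (b - a) :=
          mul_le_mul h1 h2 (abs_nonneg _) (by positivity)
      _ = d / 8 := by field_simp
  have hsi := hsmall i m₁ (by omega) hm₁ y hyI hy
  have hsj := hsmall j m₂ (by omega) hm₂ z hzI hz
  set β := max (max (1 - P i ^ m) (1 - P j ^ m)) (1 / 2) with hβ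
  have hβ1 : β < 1 := by
    have := pow_pos (hP i) m
    have := pow_pos (hP j) m
    exact max_lt (max_lt (by linarith) (by linarith)) (by norm_num)
  have hβ0 : 0 < β := lt_of_lt_of_le (by norm_num) (le_max_right _ _)
  have hβi : 1 - P i ^ m ≤ β := (le_max_left _ _).trans (le_max_left _ _)
  have hβj : 1 - P j ^ m ≤ β := (le_max_right _ _).trans (le_max_left _ _)
  set τ := ρ ^ m with hτ
  have hτ0 : 0 < τ := by positivity
  have hτ1 : τ < 1 := pow_lt_one₀ hρ0.le hρ1 (by omega)
  have hempty : ∀ s : Set ℝ, (∀ w ∈ Icc a b, w ∉ s) → ν.real s = 0 := by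
    intro s hs
    rw [measureReal_eq_zero_iff, ← compl_compl s]
    refine (ae_iff (p := fun x => x ∈ sᶜ)).mp ?_
    filter_upwards [hsupp] with x hx using hs x hx
  have hcontr : ∀ x δ S : ℝ, 0 ≤ δ → δ ≤ d / 8 → 0 ≤ S →
      (∀ x', ν.real (Metric.closedBall x' (δ / τ)) ≤ S) →
      ν.real (Metric.closedBall x δ) ≤ β * S := by
    intro x δ S hδ hδd hS0 hS
    have hi := measure_ball_le_iterate hP0 hP1 hself hρ0 hρ1.le hrρ i m x δ hδ hS
    have hj := measure_ball_le_iterate hP0 hP1 hself hρ0 hρ1.le hrρ j m x δ hδ hS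
    by_cases h1 : ∀ w ∈ Icc a b, w ∉ (fun x => r i * x + t i)^[m] ⁻¹' Metric.closedBall x δ
    · rw [hempty _ h1, mul_zero, zero_add] at hi
      exact hi.trans (mul_le_mul_of_nonneg_right hβi hS0)
    by_cases h2 : ∀ w ∈ Icc a b, w ∉ (fun x => r j * x + t j)^[m] ⁻¹' Metric.closedBall x δ
    · rw [hempty _ h2, mul_zero, zero_add] at hj
      exact hj.trans (mul_le_mul_of_nonneg_right hβj hS0)
    exfalso
    push Not at h1 h2
    obtain ⟨w, hw, hwB⟩ := h1
    obtain ⟨w', hw', hwB'⟩ := h2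
    rw [mem_preimage, Metric.mem_closedBall, Real.dist_eq] at hwB hwB'
    have e1 := abs_le.mp (hsi w hw)
    have e2 := abs_le.mp (hsj w' hw')
    have e3 := abs_le.mp hwB
    have e4 := abs_le.mp hwB'
    have : d ≤ d / 2 := by
      rw [hd, abs_le]
      constructor <;> linarith [e1.1, e1.2, e2.1, e2.2, e3.1, e3.2, e4.1, e4.2]
    linarith
  have hpow : ∀ k : ℕ, ∀ x δ : ℝ, 0 ≤ δ → δ ≤ d / 8 * τ ^ k →
      ν.real (Metric.closedBall x δ) ≤ β ^ k := by
    intro k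
    induction k with
    | zero => intro x δ _ _; simp
    | succ k ih =>
      intro x δ hδ hδk
      rw [pow_succ']
      refine hcontr x δ _ hδ (hδk.trans ?_) (by positivity) fun x' => ih x' _ (by positivity) ?_
      · exact mul_le_of_le_one_right (by positivity) (pow_le_one₀ hτ0.le hτ1.le)
      · rw [div_le_iff₀ hτ0, mul_assoc, ← pow_succ]
        exact hδk
  set c := Real.log β / Real.log τ with hc
  have hlogτ : Real.log τ < 0 := Real.log_neg hτ0 hτ1
  have hc0 : 0 < c := div_pos_of_neg_of_neg (Real.log_neg hβ0 hβ1) hlogτ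
  have hτc : τ ^ c = β := by
    rw [Real.rpow_def_of_pos hτ0, hc, mul_div_cancel₀ _ hlogτ.ne, Real.exp_log hβ0]
  refine ⟨β⁻¹ * (d / 8)⁻¹ ^ c, c, by positivity, hc0, fun x δ hδ => ?_⟩
  have hre : β⁻¹ * (d / 8)⁻¹ ^ c * δ ^ c = β⁻¹ * (δ / (d / 8)) ^ c := by
    rw [mul_assoc, ← Real.mul_rpow (by positivity) hδ.le, div_eq_mul_inv δ, mul_comm δ]
  rw [hre]
  set q := δ / (d / 8) with hq
  have hq0 : 0 < q := by positivity
  rcases le_or_gt q 1 with hq1 | hq1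
  · obtain ⟨k, hk1, hk2⟩ := exists_nat_pow_near_of_lt_one hq0 hq1 hτ0 hτ1
    have hk3 : δ ≤ d / 8 * τ ^ k := by
      rw [hq, div_le_iff₀ (by positivity)] at hk2
      linarith
    refine (hpow k x δ hδ.le hk3).trans ?_
    have h1 : β ^ (k + 1) ≤ q ^ c := by
      rw [← hτc, ← Real.rpow_natCast, ← Real.rpow_mul hτ0.le, mul_comm c, Real.rpow_mul hτ0.le,
        Real.rpow_natCast]
      exact Real.rpow_le_rpow (by positivity) hk1.le hc0.le
    rw [← div_eq_inv_mul, le_div_iff₀ hβ0, ← pow_succ]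
    exact h1
  · refine measureReal_le_one.trans ?_
    have h1 : 1 ≤ β⁻¹ := (one_le_inv₀ hβ0).mpr hβ1.le
    have h2 : 1 ≤ q ^ c := Real.one_le_rpow hq1.le hc0.le
    nlinarith

end Regularity

/-! ### Mean decay of the Fourier transform -/

section Window

variable {ν : Measure ℝ} [IsProbabilityMeasure ν]

lemma norm_fourierTransform_le_one (q : ℝ) : ‖fourierTransform ν q‖ ≤ 1 := by
  unfold fourierTransform
  refine (norm_integral_le_of_norm_le_const (C := 1) (Eventually.of_forall fun x => ?_)).trans ?_
  · rw [Complex.norm_exp_ofReal_mul_I]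
  · simp

lemma continuous_fourierTransform : Continuous (fourierTransform ν) := by
  unfold fourierTransform
  refine continuous_of_dominated (bound := fun _ => 1) (fun q => ?_) (fun q => ?_)
    (integrable_const _) (Eventually.of_forall fun x => ?_)
  · exact Continuous.aestronglyMeasurable (by fun_prop)
  · exact Eventually.of_forall fun x => by rw [Complex.norm_exp_ofReal_mul_I]
  · fun_prop

lemma sq_norm_fourierTransform (q : ℝ) :
    ((‖fourierTransform ν q‖ ^ 2 : ℝ) : ℂ) =
      ∫ z : ℝ × ℝ, Complex.exp ((2 * Real.pi * ((z.1 - z.2) * q) : ℝ) * Complex.I) ∂(ν.prod ν) := by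
  have h1 : ((‖fourierTransform ν q‖ ^ 2 : ℝ) : ℂ) =
      fourierTransform ν q * (starRingEnd ℂ) (fourierTransform ν q) := by
    rw [Complex.mul_conj, Complex.normSq_eq_norm_sq]
  have h2 : (starRingEnd ℂ) (fourierTransform ν q) =
      ∫ x, Complex.exp (((-(2 * Real.pi * q * x) : ℝ) : ℂ) * Complex.I) ∂ν := by
    unfold fourierTransform
    rw [← integral_conj]
    congr 1
    ext x
    rw [← Complex.exp_conj, map_mul, Complex.conj_I, Complex.conj_ofReal]
    push_cast
    ring_nf
  rw [h1, h2]
  unfold fourierTransform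
  rw [← integral_prod_mul]
  congr 1
  ext z
  rw [← Complex.exp_add]
  push_cast
  ring_nf

/-- Gaussian-weighted energy of the Fourier transform, written on the physical side. -/
lemma integral_gauss_fourierTransform {η : ℝ} (hη : 0 < η) :
    ∫ q : ℝ, Real.exp (-Real.pi * η ^ 2 * q ^ 2) * ‖fourierTransform ν q‖ ^ 2 =
      ∫ z : ℝ × ℝ, gaussK η (z.1 - z.2) ∂(ν.prod ν) := by
  have hg : Integrable fun ξ : ℝ => Real.exp (-(Real.pi * η ^ 2) * ξ ^ 2) :=
    integrable_exp_neg_mul_sq (by positivity)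
  have hInt : Integrable (Function.uncurry fun (q : ℝ) (z : ℝ × ℝ) =>
      (Real.exp (-Real.pi * η ^ 2 * q ^ 2) : ℂ) *
        Complex.exp ((2 * Real.pi * ((z.1 - z.2) * q) : ℝ) * Complex.I))
      (volume.prod (ν.prod ν)) := by
    refine (hg.mul_prod (integrable_const (1 : ℝ) (μ := ν.prod ν))).mono'
      (Continuous.aestronglyMeasurable (by fun_prop)) (Eventually.of_forall fun w => ?_)
    simp only [Function.uncurry]
    rw [norm_mul, Complex.norm_exp_ofReal_mul_I, Complex.norm_real,
      Real.norm_eq_abs, abs_of_pos (Real.exp_pos _), ← neg_mul]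
  have h : ((∫ q : ℝ, Real.exp (-Real.pi * η ^ 2 * q ^ 2) * ‖fourierTransform ν q‖ ^ 2 : ℝ) : ℂ) =
      ((∫ z : ℝ × ℝ, gaussK η (z.1 - z.2) ∂(ν.prod ν) : ℝ) : ℂ) := by
    rw [← integral_complex_ofReal, ← integral_complex_ofReal]
    calc ∫ q : ℝ, ((Real.exp (-Real.pi * η ^ 2 * q ^ 2) * ‖fourierTransform ν q‖ ^ 2 : ℝ) : ℂ)
        = ∫ q : ℝ, ∫ z : ℝ × ℝ, (Real.exp (-Real.pi * η ^ 2 * q ^ 2) : ℂ) *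
            Complex.exp ((2 * Real.pi * ((z.1 - z.2) * q) : ℝ) * Complex.I) ∂(ν.prod ν) := by
          congr 1
          ext q
          rw [integral_const_mul, ← sq_norm_fourierTransform, ← Complex.ofReal_mul]
      _ = _ := by
          rw [integral_integral_swap hInt]
          congr 1
          ext z
          rw [gaussK_eq_integral hη]
  exact_mod_cast h

lemma integral_gaussK_prod_le {η δ M : ℝ} (hη : 0 < η) (hδ : 0 ≤ δ)
    (hM : ∀ x, ν.real (Metric.closedBall x δ) ≤ M) :
    ∫ z : ℝ × ℝ, gaussK η (z.1 - z.2) ∂(ν.prod ν) ≤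
      η⁻¹ * (M + Real.exp (-Real.pi * (δ / η) ^ 2)) := by
  have hcont : Continuous (gaussK η) := by unfold gaussK; fun_prop
  have hle1 : ∀ x, gaussK η x ≤ η⁻¹ := by
    intro x
    refine mul_le_of_le_one_right (by positivity) ?_
    rw [Real.exp_le_one_iff]
    nlinarith [Real.pi_pos, sq_nonneg (x / η)]
  have hnn : ∀ x, 0 ≤ gaussK η x := fun x => by unfold gaussK; positivity
  have hInt : Integrable (fun z : ℝ × ℝ => gaussK η (z.1 - z.2)) (ν.prod ν) := by
    refine (integrable_const η⁻¹).mono' (Continuous.aestronglyMeasurable (by fun_prop))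
      (Eventually.of_forall fun z => ?_)
    rw [Real.norm_eq_abs, abs_of_nonneg (hnn _)]
    exact hle1 _
  rw [integral_prod _ hInt]
  have hx : ∀ x, ∫ x', gaussK η (x - x') ∂ν ≤ η⁻¹ * (M + Real.exp (-Real.pi * (δ / η) ^ 2)) := by
    intro x
    set e := Real.exp (-Real.pi * (δ / η) ^ 2) with he
    have hB : MeasurableSet (Metric.closedBall x δ) := Metric.isClosed_closedBall.measurableSet
    have hiB : Integrable ((Metric.closedBall x δ).indicator fun _ => η⁻¹) ν :=
      (integrable_const η⁻¹).indicator hB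
    calc ∫ x', gaussK η (x - x') ∂ν
        ≤ ∫ x', ((Metric.closedBall x δ).indicator (fun _ => η⁻¹) x' + η⁻¹ * e) ∂ν := by
          refine integral_mono_of_nonneg (Eventually.of_forall fun x' => hnn _)
            (hiB.add (integrable_const _)) (Eventually.of_forall fun x' => ?_)
          have he0 : 0 ≤ η⁻¹ * e := by positivity
          by_cases hx' : x' ∈ Metric.closedBall x δ
          · simp only [indicator_of_mem hx']
            linarith [hle1 (x - x')]
          · simp only [indicator_of_notMem hx', zero_add]
            rw [Metric.mem_closedBall, not_le, Real.dist_eq, abs_sub_comm] at hx'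
            unfold gaussK
            refine mul_le_mul_of_nonneg_left ?_ (by positivity)
            rw [he, Real.exp_le_exp, neg_mul, neg_mul, neg_le_neg_iff]
            refine mul_le_mul_of_nonneg_left ?_ Real.pi_pos.le
            rw [div_pow, div_pow]
            refine div_le_div_of_nonneg_right ?_ (by positivity)
            rw [← sq_abs (x - x')]
            exact pow_le_pow_left₀ hδ hx'.le 2
      _ = ν.real (Metric.closedBall x δ) * η⁻¹ + η⁻¹ * e := by
          rw [integral_add hiB (integrable_const _), integral_indicator_const _ hB]
          simp
      _ ≤ η⁻¹ * (M + e) := by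
          have := mul_le_mul_of_nonneg_right (hM x) (inv_nonneg.mpr hη.le)
          linarith
  calc ∫ x, ∫ x', gaussK η (x - x') ∂ν ∂ν
      ≤ ∫ _, η⁻¹ * (M + Real.exp (-Real.pi * (δ / η) ^ 2)) ∂ν :=
        integral_mono hInt.integral_prod_left (integrable_const _) hx
    _ = _ := by simp

/-- Averages of `‖ν̂‖²` over a window of fixed length in logarithmic scale decay exponentially. -/
lemma exists_window_bound {C c : ℝ} (hC : 0 < C) (hc : 0 < c)
    (hν : ∀ x δ : ℝ, 0 < δ → ν.real (Metric.closedBall x δ) ≤ C * δ ^ c) {ℓ : ℝ} (hℓ : 0 < ℓ) :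
    ∃ D c' : ℝ, 0 < D ∧ 0 < c' ∧ c' ≤ 1 ∧ ∀ y : ℝ,
      ∫ s in (y - ℓ)..y, ‖fourierTransform ν (Real.exp s)‖ ^ 2 ≤ D * Real.exp (-(c' * y)) := by
  set c' := min (c / 2) 1 with hc'
  have hc'0 : 0 < c' := lt_min (by positivity) one_pos
  set F : ℝ → ℝ := fun q => ‖fourierTransform ν q‖ ^ 2 with hF
  have hFc : Continuous F := by
    have := continuous_fourierTransform (ν := ν)
    fun_prop
  have hF0 : ∀ q, 0 ≤ F q := fun q => by positivity
  have hF1 : ∀ q, F q ≤ 1 := fun q =>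
    pow_le_one₀ (norm_nonneg _) (norm_fourierTransform_le_one q)
  refine ⟨Real.exp (ℓ + Real.pi) * (C + 1) + ℓ, c', by positivity, hc'0, min_le_right _ _,
    fun y => ?_⟩
  change ∫ s in (y - ℓ)..y, F (Real.exp s) ≤ _
  have hyℓ : y - ℓ ≤ y := by linarith
  rcases lt_or_ge y 0 with hy | hy
  · have h1 : ∫ s in (y - ℓ)..y, F (Real.exp s) ≤ ∫ _ in (y - ℓ)..y, (1 : ℝ) :=
      intervalIntegral.integral_mono_on hyℓ
        (Continuous.intervalIntegrable (by fun_prop) _ _) (by simp) (fun s _ => hF1 _)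
    have h2 : 1 ≤ Real.exp (-(c' * y)) := Real.one_le_exp (by nlinarith)
    have h3 : 0 < Real.exp (ℓ + Real.pi) * (C + 1) := by positivity
    simp only [intervalIntegral.integral_const, smul_eq_mul, mul_one, sub_sub_cancel] at h1
    nlinarith
  -- compare with the Gaussian weight of width `exp y` on the frequency side
  set η := Real.exp (-y) with hη
  have hη0 : 0 < η := Real.exp_pos _
  have hηy : η⁻¹ = Real.exp y := by rw [hη, Real.exp_neg, inv_inv]
  have hg : Integrable fun ξ : ℝ => Real.exp (-(Real.pi * η ^ 2) * ξ ^ 2) :=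
    integrable_exp_neg_mul_sq (by positivity)
  have hgF : Integrable fun q : ℝ => Real.exp (-Real.pi * η ^ 2 * q ^ 2) * F q := by
    refine hg.mono' (Continuous.aestronglyMeasurable (by fun_prop))
      (Eventually.of_forall fun q => ?_)
    rw [Real.norm_eq_abs, abs_mul, abs_of_pos (Real.exp_pos _), abs_of_nonneg (hF0 q), ← neg_mul]
    exact mul_le_of_le_one_right (Real.exp_pos _).le (hF1 q)
  have h1 : ∫ s in (y - ℓ)..y, F (Real.exp s) ≤
      Real.exp (ℓ - y) * ∫ q in Real.exp (y - ℓ)..Real.exp y, F q := by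
    have hsub : ∫ s in (y - ℓ)..y, (F ∘ Real.exp) s * Real.exp s =
        ∫ q in Real.exp (y - ℓ)..Real.exp y, F q :=
      intervalIntegral.integral_comp_mul_deriv (fun s _ => Real.hasDerivAt_exp s)
        Real.continuous_exp.continuousOn hFc
    rw [← hsub, ← intervalIntegral.integral_const_mul]
    refine intervalIntegral.integral_mono_on hyℓ
      (Continuous.intervalIntegrable (by fun_prop) _ _)
      (Continuous.intervalIntegrable (by fun_prop) _ _) (fun s hs => ?_)
    have : 1 ≤ Real.exp (ℓ - y) * Real.exp s := by
      rw [← Real.exp_add]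
      exact Real.one_le_exp (by linarith [hs.1])
    have := mul_le_mul_of_nonneg_left this (hF0 (Real.exp s))
    simp only [Function.comp]
    linarith
  have hle : Real.exp (y - ℓ) ≤ Real.exp y := Real.exp_le_exp.mpr hyℓ
  have h2 : ∫ q in Real.exp (y - ℓ)..Real.exp y, F q ≤
      Real.exp Real.pi * ∫ q : ℝ, Real.exp (-Real.pi * η ^ 2 * q ^ 2) * F q := by
    have e1 : ∫ q in Real.exp (y - ℓ)..Real.exp y, F q ≤
        ∫ q in Real.exp (y - ℓ)..Real.exp y,
          Real.exp Real.pi * (Real.exp (-Real.pi * η ^ 2 * q ^ 2) * F q) := by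
      refine intervalIntegral.integral_mono_on hle
        (Continuous.intervalIntegrable (by fun_prop) _ _)
        (Continuous.intervalIntegrable (by fun_prop) _ _) (fun q hq => ?_)
      have hq0 : 0 ≤ q := (Real.exp_pos _).le.trans hq.1
      have hqη : η * q ≤ 1 := by
        rw [hη, Real.exp_neg, inv_mul_le_iff₀ (Real.exp_pos _), mul_one]
        exact hq.2
      have hqη2 : (η * q) ^ 2 ≤ 1 := pow_le_one₀ (by positivity) hqη
      have : 1 ≤ Real.exp Real.pi * Real.exp (-Real.pi * η ^ 2 * q ^ 2) := by
        rw [← Real.exp_add]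
        refine Real.one_le_exp ?_
        nlinarith [Real.pi_pos]
      have := mul_le_mul_of_nonneg_right this (hF0 q)
      linarith
    refine e1.trans ?_
    rw [intervalIntegral.integral_const_mul, intervalIntegral.integral_of_le hle]
    refine mul_le_mul_of_nonneg_left ?_ (Real.exp_pos _).le
    exact setIntegral_le_integral hgF
      (Eventually.of_forall fun q => mul_nonneg (Real.exp_pos _).le (hF0 q))
  set δ := Real.exp (-(y / 2)) with hδ
  have hδ0 : 0 < δ := Real.exp_pos _
  have h3 : ∫ q : ℝ, Real.exp (-Real.pi * η ^ 2 * q ^ 2) * F q ≤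
      η⁻¹ * (C * δ ^ c + Real.exp (-Real.pi * (δ / η) ^ 2)) := by
    rw [hF, integral_gauss_fourierTransform hη0]
    exact integral_gaussK_prod_le hη0 hδ0.le fun x => hν x δ hδ0
  have h4 : δ ^ c ≤ Real.exp (-(c' * y)) := by
    rw [hδ, ← Real.exp_mul, Real.exp_le_exp]
    have : c' ≤ c / 2 := min_le_left _ _
    nlinarith
  have h5 : Real.exp (-Real.pi * (δ / η) ^ 2) ≤ Real.exp (-(c' * y)) := by
    rw [Real.exp_le_exp]
    have e : (δ / η) ^ 2 = Real.exp y := by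
      rw [hδ, hη, ← Real.exp_sub, ← Real.exp_nat_mul]
      congr 1; push_cast; ring
    rw [e]
    have e1 := Real.add_one_le_exp y
    have e2 : c' ≤ 1 := min_le_right _ _
    nlinarith [Real.pi_gt_three]
  have hexp : Real.exp (ℓ - y) * Real.exp Real.pi * η⁻¹ = Real.exp (ℓ + Real.pi) := by
    rw [hηy, ← Real.exp_add, ← Real.exp_add]
    congr 1; ring
  calc ∫ s in (y - ℓ)..y, F (Real.exp s)
      ≤ Real.exp (ℓ - y) * (Real.exp Real.pi *
          (η⁻¹ * (C * δ ^ c + Real.exp (-Real.pi * (δ / η) ^ 2)))) :=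
        h1.trans (mul_le_mul_of_nonneg_left
          (h2.trans (mul_le_mul_of_nonneg_left h3 (Real.exp_pos _).le)) (Real.exp_pos _).le)
    _ = Real.exp (ℓ + Real.pi) * (C * δ ^ c + Real.exp (-Real.pi * (δ / η) ^ 2)) := by
        rw [← hexp]; ring
    _ ≤ Real.exp (ℓ + Real.pi) * (C * Real.exp (-(c' * y)) + Real.exp (-(c' * y))) := by
        gcongr
    _ ≤ _ := by
        have : 0 ≤ ℓ * Real.exp (-(c' * y)) := by positivity
        linarith

end Window

/-! ### Decay of subharmonic functions -/

section Decay

variable {ι : Type*} [Fintype ι] {P a : ι → ℝ} {ℓ : ℝ}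

set_option maxHeartbeats 1000000 in
/-- Choice of scales: `n` steps of the walk, smoothing at scale `n ^ (-κ)`, a majorant that is
harmonic beyond `K = (κ / 2) log n`, and a window of radius `n ^ (1 / 2 + ε)`. -/
lemma exists_decay_nat (hℓ : 0 < ℓ) {A : ℝ} (hA : 0 < A) (ha : ∀ i, ℓ ≤ a i) (haA : ∀ i, a i ≤ A)
    (hP : ∀ i, 0 ≤ P i) (hP1 : ∑ i, P i = 1) {G : ℝ → ℝ} (hGc : Continuous G)
    (hG0 : ∀ x, 0 ≤ G x) (hG1 : ∀ x, G x ≤ 1) (hG : ∀ x, G x ≤ stepAvg P a G x)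
    {Λ D c' C κ : ℝ} (hΛ0 : 0 ≤ Λ)
    (hΛ : ∀ K, ∀ x ≤ K, ∀ y ≤ K, |G x - G y| ≤ Λ * Real.exp K * |x - y|)
    (hD : 0 < D) (hc' : 0 < c') (hc'1 : c' ≤ 1)
    (hE : ∀ y, ∫ x in (y - ℓ)..y, G x ≤ D * Real.exp (-(c' * y)))
    (hC : 0 < C) (hκ : 0 < κ) (hκ1 : κ ≤ 1 / 4)
    (hS : ∀ n : ℕ, 1 ≤ n → ∀ x,
      (stepAvg P a)^[n] (gaussK ((n : ℝ) ^ (-κ))) x ≤ C * (n : ℝ) ^ (-(1 / 2) : ℝ)) :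
    ∃ C' ε : ℝ, 0 < C' ∧ 0 < ε ∧ ∀ᶠ n : ℕ in atTop, ∀ s : ℝ, 2 * A * n ≤ s →
      G s ≤ C' * (n : ℝ) ^ (-ε) := by
  set ε := c' * κ / 4 with hε
  have hε0 : 0 < ε := by positivity
  have hεκ : ε ≤ κ / 4 := by rw [hε]; nlinarith
  set σ2 := ∑ i, P i * (a i - ∑ j, P j * a j) ^ 2 with hσ
  have hσ0 : 0 ≤ σ2 := Finset.sum_nonneg fun i _ => mul_nonneg (hP i) (sq_nonneg _)
  set mm := ∑ i, P i * a i with hmm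
  have hmA : mm ≤ A := by
    calc mm ≤ ∑ i, P i * A := Finset.sum_le_sum fun i _ => mul_le_mul_of_nonneg_left (haA i) (hP i)
      _ = A := by rw [← Finset.sum_mul, hP1, one_mul]
  have hM1 := gaussM1_nonneg
  have hM2 := gaussM2_nonneg
  set D' := D * Real.exp (c' * (2 * A)) with hD'
  have hD'0 : 0 < D' := by positivity
  refine ⟨C * (2 / ℓ + 1) * (4 * D') + (gaussM2 + σ2) + (1 / ℓ + Λ) * gaussM1, ε, by positivity,
    hε0, ?_⟩
  -- all the scales are eventually small compared with `A * n`
  have hbig : ∀ᶠ x : ℝ in atTop, Real.log x + x ^ (3 / 4 : ℝ) ≤ A * x := by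
    have h1 : ∀ᶠ x : ℝ in atTop, ‖Real.log x‖ ≤ A / 2 * ‖id x‖ :=
      Real.isLittleO_log_id_atTop.def (half_pos hA)
    have h2 : ∀ᶠ x : ℝ in atTop, (2 / A) ^ 4 ≤ x := eventually_ge_atTop _
    filter_upwards [h1, h2, eventually_gt_atTop 0] with x hx1 hx2 hx0
    rw [id, Real.norm_eq_abs, Real.norm_eq_abs, abs_of_pos hx0] at hx1
    have h3 : 2 / A ≤ x ^ (1 / 4 : ℝ) := by
      calc 2 / A = ((2 / A) ^ 4) ^ (1 / 4 : ℝ) := by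
            rw [← Real.rpow_natCast, ← Real.rpow_mul (by positivity)]; norm_num
        _ ≤ _ := Real.rpow_le_rpow (by positivity) hx2 (by norm_num)
    have h4 : x ^ (3 / 4 : ℝ) * x ^ (1 / 4 : ℝ) = x := by
      rw [← Real.rpow_add hx0]; norm_num
    have h5 : x ^ (3 / 4 : ℝ) ≤ A / 2 * x := by
      have := mul_le_mul_of_nonneg_left h3 (Real.rpow_nonneg hx0.le (3 / 4 : ℝ))
      rw [h4] at this
      calc x ^ (3 / 4 : ℝ) = A / 2 * (x ^ (3 / 4 : ℝ) * (2 / A)) := by field_simp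
        _ ≤ _ := by gcongr
    linarith [le_abs_self (Real.log x)]
  filter_upwards [tendsto_natCast_atTop_atTop.eventually hbig, eventually_ge_atTop 1]
    with n hbn hn s hs
  set N : ℝ := (n : ℝ) with hN
  have hN1 : (1 : ℝ) ≤ N := by rw [hN]; exact_mod_cast hn
  have hN0 : 0 < N := by linarith
  have hlog0 : 0 ≤ Real.log N := Real.log_nonneg hN1
  set K := κ / 2 * Real.log N with hK
  have hexpK : Real.exp K = N ^ (κ / 2) := by
    rw [hK, Real.rpow_def_of_pos hN0, mul_comm]
  have hKlog : K ≤ Real.log N := by rw [hK]; nlinarith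
  set B := N ^ (1 / 2 + ε) with hB
  have hB0 : 0 < B := by positivity
  have hB1 : 1 ≤ B := Real.one_le_rpow hN1 (by linarith)
  have hB34 : B ≤ N ^ (3 / 4 : ℝ) := Real.rpow_le_rpow_of_exponent_le hN1 (by linarith)
  have hNA : 0 < N ^ (3 / 4 : ℝ) := by positivity
  set η := N ^ (-κ) with hη
  have hη0 : 0 < η := by positivity
  have hη1 : η ≤ 1 := Real.rpow_le_one_of_one_le_of_nonpos hN1 (by linarith)
  set E := D' * N ^ (-(2 * ε)) with hEdef
  have hE0 : 0 < E := by positivity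
  have hE' : ∀ y, K - 2 * A ≤ y → y ≤ K → ∫ x in (y - ℓ)..y, G x ≤ E := by
    intro y hy _
    refine (hE y).trans ?_
    have : Real.exp (-(c' * y)) ≤ Real.exp (c' * (2 * A)) * N ^ (-(2 * ε)) := by
      rw [Real.rpow_def_of_pos hN0, ← Real.exp_add, Real.exp_le_exp]
      have : c' * (K - 2 * A) ≤ c' * y := mul_le_mul_of_nonneg_left hy hc'.le
      have e : Real.log N * -(2 * ε) = -(c' * K) := by rw [hε, hK]; ring
      rw [e]
      linarith
    rw [hEdef, hD', mul_assoc]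
    exact mul_le_mul_of_nonneg_left this hD.le
  obtain ⟨u, hGu, hu01, huL, huh, huE⟩ := exists_majorant hℓ ha haA hP hP1 hA.le hGc hG0 hG1 hG
    (hΛ K) hE'
  have huc : Continuous u := by
    have hL0 : 0 ≤ 1 / ℓ + Λ * Real.exp K := by positivity
    refine (LipschitzWith.of_dist_le_mul (K := ⟨_, hL0⟩) fun x y => ?_).continuous
    rw [Real.dist_eq, Real.dist_eq]
    exact huL x y
  have hmain := harmonic_le_integral hA.le haA hP hP1 huc hu01 huL huh n (s := s)
    (by rw [← hN]; nlinarith) hη0 (hS n hn) hB0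
  rw [← hN, ← hmm, ← hσ] at hmain
  have hwin : ∫ x in (s - N * mm - B)..(s - N * mm + B), u x ≤ (2 / ℓ + 1) * B * (4 * E) := by
    have hNm : N * mm ≤ N * A := mul_le_mul_of_nonneg_left hmA hN0.le
    refine (integral_le_of_window hℓ huc (fun x => (hu01 x).1) huE (by nlinarith)
      (by linarith)).trans ?_
    refine mul_le_mul_of_nonneg_right ?_ (by positivity)
    have e : (s - N * mm + B - (s - N * mm - B)) / ℓ = 2 / ℓ * B := by ring
    rw [e]
    linarith
  have hT1 : C * N ^ (-(1 / 2) : ℝ) * (∫ x in (s - N * mm - B)..(s - N * mm + B), u x) ≤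
      C * (2 / ℓ + 1) * (4 * D') * N ^ (-ε) := by
    have e : N ^ (-(1 / 2) : ℝ) * B * N ^ (-(2 * ε)) = N ^ (-ε) := by
      rw [hB, ← Real.rpow_add hN0, ← Real.rpow_add hN0]
      congr 1; ring
    calc _ ≤ C * N ^ (-(1 / 2) : ℝ) * ((2 / ℓ + 1) * B * (4 * E)) :=
          mul_le_mul_of_nonneg_left hwin (by positivity)
      _ = C * (2 / ℓ + 1) * (4 * D') * (N ^ (-(1 / 2) : ℝ) * B * N ^ (-(2 * ε))) := by
          rw [hEdef]; ring
      _ = _ := by rw [e]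
  have hT2 : (η ^ 2 * gaussM2 + N * σ2) / B ^ 2 ≤ (gaussM2 + σ2) * N ^ (-ε) := by
    have h1 : η ^ 2 * gaussM2 + N * σ2 ≤ (gaussM2 + σ2) * N := by
      have : η ^ 2 ≤ N := (pow_le_one₀ hη0.le hη1).trans hN1
      have := mul_le_mul_of_nonneg_right this hM2
      linarith
    have h2 : N ≤ N ^ (-ε) * B ^ 2 := by
      rw [hB, ← Real.rpow_natCast, ← Real.rpow_mul hN0.le, ← Real.rpow_add hN0]
      conv_lhs => rw [← Real.rpow_one N]
      refine Real.rpow_le_rpow_of_exponent_le hN1 ?_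
      push_cast
      linarith
    rw [div_le_iff₀ (by positivity), mul_assoc]
    exact h1.trans (mul_le_mul_of_nonneg_left h2 (by positivity))
  have hT3 : (1 / ℓ + Λ * Real.exp K) * (η * gaussM1) ≤ (1 / ℓ + Λ) * gaussM1 * N ^ (-ε) := by
    have hpow1 : 1 ≤ N ^ (κ / 2) := Real.one_le_rpow hN1 (by linarith)
    have h1 : 1 / ℓ + Λ * Real.exp K ≤ (1 / ℓ + Λ) * N ^ (κ / 2) := by
      rw [hexpK, add_mul]
      have : 1 / ℓ * 1 ≤ 1 / ℓ * N ^ (κ / 2) := mul_le_mul_of_nonneg_left hpow1 (by positivity)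
      linarith
    have h2 : N ^ (κ / 2) * η ≤ N ^ (-ε) := by
      rw [hη, ← Real.rpow_add hN0]
      exact Real.rpow_le_rpow_of_exponent_le hN1 (by linarith)
    calc (1 / ℓ + Λ * Real.exp K) * (η * gaussM1)
        ≤ (1 / ℓ + Λ) * N ^ (κ / 2) * (η * gaussM1) :=
          mul_le_mul_of_nonneg_right h1 (by positivity)
      _ = (1 / ℓ + Λ) * gaussM1 * (N ^ (κ / 2) * η) := by ring
      _ ≤ _ := mul_le_mul_of_nonneg_left h2 (by positivity)
  calc G s ≤ u s := hGu s
    _ ≤ _ := hmain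
    _ ≤ C * (2 / ℓ + 1) * (4 * D') * N ^ (-ε) + (gaussM2 + σ2) * N ^ (-ε) +
        (1 / ℓ + Λ) * gaussM1 * N ^ (-ε) := add_le_add (add_le_add hT1 hT2) hT3
    _ = _ := by ring

lemma exists_decay_real {A : ℝ} (hA : 0 < A) {G : ℝ → ℝ} {C ε : ℝ} (hC : 0 < C) (hε : 0 < ε)
    (h : ∀ᶠ n : ℕ in atTop, ∀ s : ℝ, 2 * A * n ≤ s → G s ≤ C * (n : ℝ) ^ (-ε)) :
    ∃ C' S₀ : ℝ, 0 < C' ∧ ∀ s, S₀ ≤ s → G s ≤ C' * s ^ (-ε) := by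
  obtain ⟨n₀, hn₀⟩ := eventually_atTop.mp h
  refine ⟨C * (4 * A) ^ ε, 4 * A * (n₀ + 1), by positivity, fun s hs => ?_⟩
  have hs4 : 4 * A ≤ s := by
    have : (0 : ℝ) ≤ n₀ := Nat.cast_nonneg _
    nlinarith
  have hs0 : 0 < s := by linarith
  have hq : 0 ≤ s / (2 * A) := by positivity
  have hq2 : 2 ≤ s / (2 * A) := by rw [le_div_iff₀ (by positivity)]; linarith
  set n := ⌊s / (2 * A)⌋₊ with hn
  have hn1 : (n : ℝ) ≤ s / (2 * A) := Nat.floor_le hq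
  have hn2 : s / (2 * A) < n + 1 := Nat.lt_floor_add_one _
  have hn3 : s / (4 * A) ≤ n := by
    have : s / (4 * A) = s / (2 * A) / 2 := by field_simp; norm_num
    rw [this]; linarith
  have hnn : n₀ ≤ n := by
    have h1 : (n₀ : ℝ) + 1 ≤ s / (4 * A) := by rw [le_div_iff₀ (by positivity)]; linarith
    have h2 : (n₀ : ℝ) ≤ n := by linarith
    exact_mod_cast h2
  have h1 := hn₀ n hnn s (by
    rw [le_div_iff₀ (by positivity)] at hn1; linarith)
  refine h1.trans ?_
  rw [mul_assoc]
  refine mul_le_mul_of_nonneg_left ?_ hC.le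
  calc (n : ℝ) ^ (-ε) ≤ (s / (4 * A)) ^ (-ε) :=
        Real.rpow_le_rpow_of_nonpos (by positivity) hn3 (by linarith)
    _ = (4 * A) ^ ε * s ^ (-ε) := by
        rw [Real.div_rpow hs0.le (by positivity), Real.rpow_neg (by positivity : 0 ≤ 4 * A),
          div_inv_eq_mul, mul_comm]

end Decay

/-! ### Fourier transforms of self-similar measures -/

section Fourier

variable {ν : Measure ℝ}

lemma norm_fourierTransform_neg (q : ℝ) :
    ‖fourierTransform ν (-q)‖ = ‖fourierTransform ν q‖ := by
  have : fourierTransform ν (-q) = (starRingEnd ℂ) (fourierTransform ν q) := by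
    unfold fourierTransform
    rw [← integral_conj]
    congr 1
    ext x
    rw [← Complex.exp_conj, map_mul, Complex.conj_I, Complex.conj_ofReal]
    push_cast
    ring_nf
  rw [this, RCLike.norm_conj]

lemma norm_fourierTransform_abs_mul (c q : ℝ) :
    ‖fourierTransform ν (|c| * q)‖ = ‖fourierTransform ν (c * q)‖ := by
  rcases abs_cases c with ⟨h, _⟩ | ⟨h, _⟩
  · rw [h]
  · rw [h, neg_mul, norm_fourierTransform_neg]

lemma norm_exp_sub_exp_le (α β : ℝ) :
    ‖Complex.exp (α * Complex.I) - Complex.exp (β * Complex.I)‖ ≤ |α - β| := by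
  have h : Complex.exp (α * Complex.I) - Complex.exp (β * Complex.I) =
      Complex.exp (β * Complex.I) * (Complex.exp (Complex.I * ((α - β : ℝ) : ℂ)) - 1) := by
    rw [mul_sub, mul_one, ← Complex.exp_add]
    push_cast
    ring_nf
  rw [h, norm_mul, Complex.norm_exp_ofReal_mul_I, one_mul]
  exact Real.norm_exp_I_mul_ofReal_sub_one_le

variable [IsProbabilityMeasure ν]

lemma norm_fourierTransform_sub_le {M : ℝ} (hM : ∀ᵐ x ∂ν, |x| ≤ M) (q q' : ℝ) :
    ‖fourierTransform ν q - fourierTransform ν q'‖ ≤ 2 * Real.pi * M * |q - q'| := by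
  have hInt : ∀ q : ℝ, Integrable
      (fun x : ℝ => Complex.exp (((2 * Real.pi * q * x : ℝ) : ℂ) * Complex.I)) ν := by
    intro q
    refine (integrable_const (1 : ℝ)).mono' (Continuous.aestronglyMeasurable (by fun_prop))
      (Eventually.of_forall fun x => ?_)
    rw [Complex.norm_exp_ofReal_mul_I]
  unfold fourierTransform
  rw [← integral_sub (hInt q) (hInt q')]
  refine (norm_integral_le_of_norm_le_const (C := 2 * Real.pi * M * |q - q'|) ?_).trans
    (by simp)
  filter_upwards [hM] with x hx
  refine (norm_exp_sub_exp_le _ _).trans ?_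
  have : 2 * Real.pi * q * x - 2 * Real.pi * q' * x = 2 * Real.pi * (x * (q - q')) := by ring
  rw [this, abs_mul, abs_of_pos Real.two_pi_pos, abs_mul x, mul_assoc _ M]
  have := mul_le_mul_of_nonneg_right hx (abs_nonneg (q - q'))
  exact mul_le_mul_of_nonneg_left this Real.two_pi_pos.le

lemma abs_exp_sub_exp_le {K x y : ℝ} (hx : x ≤ K) (hy : y ≤ K) :
    |Real.exp x - Real.exp y| ≤ Real.exp K * |x - y| := by
  have key : ∀ x y : ℝ, x ≤ y → y ≤ K → Real.exp y - Real.exp x ≤ Real.exp K * (y - x) := by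
    intro x y hxy hy
    have h1 : Real.exp x = Real.exp y * Real.exp (x - y) := by rw [← Real.exp_add]; ring_nf
    have h2 := Real.add_one_le_exp (x - y)
    have h3 : Real.exp y ≤ Real.exp K := Real.exp_le_exp.mpr hy
    have h4 := Real.exp_pos y
    rw [h1]
    nlinarith [mul_le_mul_of_nonneg_right h3 (sub_nonneg.mpr hxy)]
  rcases le_total x y with h | h
  · rw [abs_sub_comm, abs_of_nonneg (sub_nonneg.mpr (Real.exp_le_exp.mpr h)), abs_sub_comm x,
      abs_of_nonneg (sub_nonneg.mpr h)]
    exact key x y h hy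
  · rw [abs_of_nonneg (sub_nonneg.mpr (Real.exp_le_exp.mpr h)), abs_of_nonneg (sub_nonneg.mpr h)]
    exact key y x h hx

lemma abs_sq_norm_fourierTransform_sub_le {M : ℝ} (hM : ∀ᵐ x ∂ν, |x| ≤ M) (hM0 : 0 ≤ M)
    (K x : ℝ) (hx : x ≤ K) (y : ℝ) (hy : y ≤ K) :
    |‖fourierTransform ν (Real.exp x)‖ ^ 2 - ‖fourierTransform ν (Real.exp y)‖ ^ 2| ≤
      4 * Real.pi * M * Real.exp K * |x - y| := by
  set u := ‖fourierTransform ν (Real.exp x)‖ with hu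
  set v := ‖fourierTransform ν (Real.exp y)‖ with hv
  have hu0 : 0 ≤ u := norm_nonneg _
  have hv0 : 0 ≤ v := norm_nonneg _
  have hu1 : u ≤ 1 := norm_fourierTransform_le_one _
  have hv1 : v ≤ 1 := norm_fourierTransform_le_one _
  have h1 : |u - v| ≤ 2 * Real.pi * M * (Real.exp K * |x - y|) := by
    refine (abs_norm_sub_norm_le _ _).trans ((norm_fourierTransform_sub_le hM _ _).trans ?_)
    exact mul_le_mul_of_nonneg_left (abs_exp_sub_exp_le hx hy) (by positivity)
  have h2 : u ^ 2 - v ^ 2 = (u - v) * (u + v) := by ring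
  rw [h2, abs_mul, abs_of_nonneg (by linarith : 0 ≤ u + v)]
  have h3 : |u - v| * (u + v) ≤ |u - v| * 2 :=
    mul_le_mul_of_nonneg_left (by linarith) (abs_nonneg _)
  linarith

/-- The functional equation of `ν̂` makes `s ↦ ‖ν̂(exp s)‖²` subharmonic for the random walk with
steps `-log |r i|`. -/
lemma sq_norm_fourierTransform_le {ι : Type*} [Fintype ι] {r t : ι → ℝ} (hr : ∀ i, 0 < |r i|)
    {p : ι → ℝ≥0∞} (hp1 : ∑ i, p i = 1)
    (hν : ν = ∑ i, p i • ν.map (fun x => r i * x + t i)) (s : ℝ) :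
    ‖fourierTransform ν (Real.exp s)‖ ^ 2 ≤
      ∑ i, (p i).toReal * ‖fourierTransform ν (Real.exp (s - -Real.log |r i|))‖ ^ 2 := by
  have hp : ∀ i, p i ≠ ∞ := fun i =>
    ne_top_of_le_ne_top ENNReal.one_ne_top (hp1 ▸ Finset.single_le_sum (fun j _ => zero_le) (Finset.mem_univ i))
  have hP1 : ∑ i, (p i).toReal = 1 := by
    rw [← ENNReal.toReal_sum fun i _ => hp i, hp1, ENNReal.toReal_one]
  set q := Real.exp s with hq
  have hcont : Continuous fun x : ℝ =>
    Complex.exp (((2 * Real.pi * q * x : ℝ) : ℂ) * Complex.I) := by fun_prop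
  have hmeas : ∀ i, Measurable fun x : ℝ => r i * x + t i := fun i => by fun_prop
  have hprob : ∀ i, IsProbabilityMeasure (ν.map fun x : ℝ => r i * x + t i) := fun i =>
    Measure.isProbabilityMeasure_map (hmeas i).aemeasurable
  have hInt : ∀ i, Integrable (fun x : ℝ =>
      Complex.exp (((2 * Real.pi * q * x : ℝ) : ℂ) * Complex.I))
      (p i • ν.map fun x => r i * x + t i) := by
    intro i
    have := hprob i
    refine Integrable.smul_measure ?_ (hp i)
    refine (integrable_const (1 : ℝ)).mono' hcont.aestronglyMeasurable
      (Eventually.of_forall fun x => ?_)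
    rw [Complex.norm_exp_ofReal_mul_I]
  have hfun : fourierTransform ν q = ∑ i, ((p i).toReal : ℂ) *
      (Complex.exp (((2 * Real.pi * q * t i : ℝ) : ℂ) * Complex.I) *
        fourierTransform ν (r i * q)) := by
    calc fourierTransform ν q = ∫ x, Complex.exp (((2 * Real.pi * q * x : ℝ) : ℂ) * Complex.I)
          ∂(∑ i, p i • ν.map (fun x => r i * x + t i)) := by
          rw [← hν]; rfl
      _ = _ := by
          rw [integral_finsetSum_measure fun i _ => hInt i]
          refine Finset.sum_congr rfl fun i _ => ?_
          rw [integral_smul_measure, integral_map (hmeas i).aemeasurable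
            hcont.aestronglyMeasurable, Complex.real_smul]
          congr 1
          unfold fourierTransform
          rw [← integral_const_mul]
          congr 1
          ext x
          rw [← Complex.exp_add]
          push_cast
          ring_nf
  have hnorm : ‖fourierTransform ν q‖ ≤ ∑ i, (p i).toReal *
      ‖fourierTransform ν (Real.exp (s - -Real.log |r i|))‖ := by
    rw [hfun]
    refine (norm_sum_le _ _).trans (Finset.sum_le_sum fun i _ => le_of_eq ?_)
    rw [norm_mul, norm_mul, Complex.norm_exp_ofReal_mul_I, one_mul, Complex.norm_real,
      Real.norm_eq_abs, abs_of_nonneg ENNReal.toReal_nonneg, sub_neg_eq_add, Real.exp_add,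
      Real.exp_log (hr i), mul_comm _ |r i|, norm_fourierTransform_abs_mul]
  calc ‖fourierTransform ν q‖ ^ 2 ≤ (∑ i, (p i).toReal *
      ‖fourierTransform ν (Real.exp (s - -Real.log |r i|))‖) ^ 2 :=
        pow_le_pow_left₀ (norm_nonneg _) hnorm 2
    _ ≤ _ := Real.pow_arith_mean_le_arith_mean_pow _ _ _ (fun i _ => ENNReal.toReal_nonneg) hP1
        (fun i _ => norm_nonneg _) 2

lemma measureReal_selfSimilar {ι : Type*} [Fintype ι] {r t : ι → ℝ}
    {p : ι → ℝ≥0∞} (hp1 : ∑ i, p i = 1)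
    (hν : ν = ∑ i, p i • ν.map (fun x => r i * x + t i)) (B : Set ℝ) (hB : MeasurableSet B) :
    ν.real B = ∑ i, (p i).toReal * ν.real ((fun x => r i * x + t i) ⁻¹' B) := by
  have hp : ∀ i, p i ≠ ∞ := fun i =>
    ne_top_of_le_ne_top ENNReal.one_ne_top (hp1 ▸ Finset.single_le_sum (fun j _ => zero_le) (Finset.mem_univ i))
  have h : ν B = ∑ i, p i * ν ((fun x => r i * x + t i) ⁻¹' B) := by
    conv_lhs => rw [hν]
    rw [Measure.finsetSum_apply]
    refine Finset.sum_congr rfl fun i _ => ?_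
    rw [Measure.smul_apply, smul_eq_mul, Measure.map_apply (by fun_prop) hB]
  rw [measureReal_def, h, ENNReal.toReal_sum fun i _ =>
    ENNReal.mul_ne_top (hp i) (measure_ne_top _ _)]
  simp only [ENNReal.toReal_mul, measureReal_def]

end Fourier

theorem stmt4 {n : ℕ} (hn : 2 ≤ n) (r t : Fin n → ℝ) (f : Fin n → ℝ → ℝ)
    (hf : ∀ i x, f i x = r i * x + t i)
    (hr : ∀ i, 0 < |r i| ∧ |r i| < 1)
    (a b : ℝ) (hab : a < b)
    (hmaps : ∀ i, MapsTo (f i) (Icc a b) (Icc a b))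
    (hfix : ∃ i j : Fin n, ∃ y ∈ Icc a b, ∃ z ∈ Icc a b, f i y = y ∧ f j z = z ∧ y ≠ z)
    (hDio : ∃ l C₀ X : ℝ, 0 < l ∧ 0 < C₀ ∧ 0 < X ∧ ∀ x : ℝ, X ≤ |x| → ∀ y : ℝ,
      ∃ i : Fin n, C₀ * |x| ^ (-l) ≤
        |x * Real.log |r i| + y - (round (x * Real.log |r i| + y) : ℝ)|)
    (p : Fin n → ℝ≥0∞) (hp : ∀ i, 0 < p i) (hp1 : ∑ i, p i = 1)
    (ν : Measure ℝ) (hνP : IsProbabilityMeasure ν)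
    (hν : ν = ∑ i, p i • ν.map (f i)) :
    ∃ α C Q : ℝ, 0 < α ∧ 0 < C ∧ 0 < Q ∧ ∀ q : ℝ, Q ≤ |q| →
      ‖fourierTransform ν q‖ ≤ C * Real.log |q| ^ (-α) := by
  obtain rfl : f = fun i x => r i * x + t i := by ext i x; exact hf i x
  have : Nonempty (Fin n) := ⟨⟨0, by omega⟩⟩
  set P : Fin n → ℝ := fun i => (p i).toReal with hPdef
  have hptop : ∀ i, p i ≠ ∞ := fun i =>
    ne_top_of_le_ne_top ENNReal.one_ne_top
      (hp1 ▸ Finset.single_le_sum (fun j _ => zero_le) (Finset.mem_univ i))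
  have hP : ∀ i, 0 < P i := fun i => ENNReal.toReal_pos (hp i).ne' (hptop i)
  have hP0 : ∀ i, 0 ≤ P i := fun i => (hP i).le
  have hP1 : ∑ i, P i = 1 := by
    rw [hPdef, ← ENNReal.toReal_sum fun i _ => hptop i, hp1, ENNReal.toReal_one]
  have hself := measureReal_selfSimilar hp1 hν
  obtain ⟨iR, hiR⟩ := Finite.exists_max fun i => |r i|
  obtain ⟨iρ, hiρ⟩ := Finite.exists_min fun i => |r i|
  obtain ⟨iP, hiP⟩ := Finite.exists_min P
  have hsupp : ∀ᵐ x ∂ν, x ∈ Icc a b :=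
    ae_mem_Icc_of_selfSimilar hP0 hP1 hself (hr iR).1 (hr iR).2 hiR hab hmaps
  obtain ⟨i, j, y, hyI, z, hzI, hy, hz, hyz⟩ := hfix
  obtain ⟨Cf, cf, hCf, hcf, hfro⟩ := exists_frostman hP hP1 hself (hr iρ).1 hiρ
    (fun i => (hr i).2) hab hsupp hyI hzI hy hz hyz
  set s₀ : Fin n → ℝ := fun i => -Real.log |r i| with hs₀
  have hℓ : 0 < s₀ iR := neg_pos.mpr (Real.log_neg (hr iR).1 (hr iR).2)
  have hA : 0 < s₀ iρ := neg_pos.mpr (Real.log_neg (hr iρ).1 (hr iρ).2)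
  have hs₀ℓ : ∀ i, s₀ iR ≤ s₀ i := fun i => neg_le_neg (Real.log_le_log (hr i).1 (hiR i))
  have hs₀A : ∀ i, s₀ i ≤ s₀ iρ := fun i => neg_le_neg (Real.log_le_log (hr iρ).1 (hiρ i))
  obtain ⟨D, c', hD, hc', hc'1, hwin⟩ := exists_window_bound hCf hcf hfro hℓ
  obtain ⟨l, C₀, X, hl, hC₀, hX, hdio⟩ := hDio
  have hdio' : ∀ x : ℝ, X ≤ |x| → ∀ y : ℝ, ∃ i, C₀ * |x| ^ (-l) ≤
      |x * s₀ i + y - round (x * s₀ i + y)| := by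
    intro x hx y
    obtain ⟨i, hi⟩ := hdio (-x) (by rwa [abs_neg]) y
    refine ⟨i, ?_⟩
    rw [abs_neg, neg_mul_comm] at hi
    exact hi
  obtain ⟨C, κ, hC, hκ, hκ1, hdens⟩ := exists_density_bound hP0 hP1 hiP (hP iP) hl hC₀ hX hdio'
  have hM : ∀ᵐ x ∂ν, |x| ≤ max |a| |b| := by
    filter_upwards [hsupp] with x hx using abs_le_max_abs_abs hx.1 hx.2
  have hM0 : 0 ≤ max |a| |b| := (abs_nonneg a).trans (le_max_left _ _)
  obtain ⟨C', ε, hC', hε, hdecay⟩ := exists_decay_nat (P := P) (a := s₀)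
    (G := fun s => ‖fourierTransform ν (Real.exp s)‖ ^ 2) hℓ hA hs₀ℓ hs₀A hP0 hP1
    (by have := continuous_fourierTransform (ν := ν); fun_prop) (fun s => by positivity)
    (fun s => pow_le_one₀ (norm_nonneg _) (norm_fourierTransform_le_one _))
    (sq_norm_fourierTransform_le (fun i => (hr i).1) hp1 hν)
    (by positivity : 0 ≤ 4 * Real.pi * max |a| |b|)
    (abs_sq_norm_fourierTransform_sub_le hM hM0) hD hc' hc'1 hwin hC hκ hκ1 hdens
  obtain ⟨C'', S₀, hC'', hfin⟩ := exists_decay_real hA hC' hε hdecay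
  refine ⟨ε / 2, √C'', Real.exp (max S₀ 1), by positivity, by positivity, Real.exp_pos _,
    fun q hq => ?_⟩
  have hq0 : 0 < |q| := (Real.exp_pos _).trans_le hq
  have hlog : max S₀ 1 ≤ Real.log |q| := (Real.le_log_iff_exp_le hq0).mpr hq
  have hlog0 : 0 < Real.log |q| := one_pos.trans_le ((le_max_right _ _).trans hlog)
  have h1 := hfin (Real.log |q|) ((le_max_left _ _).trans hlog)
  simp only [Real.exp_log hq0] at h1
  have h2 : ‖fourierTransform ν |q|‖ = ‖fourierTransform ν q‖ := by
    simpa using norm_fourierTransform_abs_mul (ν := ν) q 1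
  rw [h2] at h1
  refine le_of_sq_le_sq ?_ (by positivity)
  rw [mul_pow, Real.sq_sqrt hC''.le, ← Real.rpow_natCast (_ ^ _), ← Real.rpow_mul hlog0.le]
  rwa [show -(ε / 2) * ((2 : ℕ) : ℝ) = -ε by push_cast; ring]
end
end

section
/- Let μ be a self-similar measure on ℝ (for a self-similar IFS with two maps having distinct fixed points and a strictly positive probability vector). If μ is a Rajchman measure, then μ is pointwise absolutely normal. -/
/-!
A Rajchman self-similar measure `μ` is normal to every base because digits of different scales
decouple along the self-similar structure.

Fix a base `P`, a nonzero frequency `m` and a phase `φ`, and put `F u = cos (2π m u + φ)`. By the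
Rajchman property, `∫ F (σ x + s) dμ ≤ ε` whenever `|σ| ≥ L`, uniformly in `s`
(`integral_cos_le`, `exists_fourier_le`). Let `q = P ^ j` with `j` large. An affine image of `μ` of
slope at least `L` splits, by iterating `μ = ∑ pᵢ (fᵢ)_* μ`, into affine images of `μ` so small
that `F` is almost constant on each of them, and which nevertheless have slope at least `L` after
multiplication by `q`. Hence in `exp (ε ∑_{k < N} F (q ^ k u))` the term `k = 0` can be separated
from the others (`decouple`), and induction on `N` bounds the integral of this exponential by
`exp (3 ε² N)` (`exp_moment`). Markov's inequality and Borel–Cantelli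
(`ae_eventually_le_of_exp_moment`) give `∑_{k < N} F (q ^ k P ^ i x) ≤ 4 ε N` for almost every `x`
and all large `N`; the exponents of `P` are reassembled from the residue classes modulo `j`
(`eventually_sum_le`).

Letting `ε → 0` and using the phases `0, π, ±π/2` shows that the averages of every nontrivial
character along the orbit of almost every `x` tend to `0`, and Weyl's criterion
(`pNormal_of_fourier`) concludes.
-/

open MeasureTheory Filter Set
open scoped ENNReal Topology

noncomputable section

/-- `x` is normal to base `p`: the orbit of `x` under multiplication by `p`, taken mod 1,
equidistributes for the Haar (Lebesgue) measure on the circle `ℝ/ℤ`. -/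
def PNormal (p : ℕ) (x : ℝ) : Prop :=
  ∀ g : C(UnitAddCircle, ℝ),
    Tendsto (fun N : ℕ => (N : ℝ)⁻¹ * ∑ k ∈ Finset.Icc 1 N, g (((p : ℝ) ^ k * x : ℝ)))
      atTop (nhds (∫ z, g z))

/-- `x` is absolutely normal: normal to every integer base `p ≥ 2`. -/
def AbsolutelyNormal (x : ℝ) : Prop := ∀ p : ℕ, 2 ≤ p → PNormal p x

/-- A measure is pointwise absolutely normal if almost every point is absolutely normal. -/
def PointwiseAbsolutelyNormal (ν : Measure ℝ) : Prop :=
  ∀ᵐ x ∂ν, AbsolutelyNormal x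

/-! ### Self-similar measures and separation of scales -/

/-- A self-similar probability measure gives full mass to a bounded set. -/
lemma exists_bound {n : ℕ} (r t : Fin n → ℝ) (ρ : ℝ) (hρ0 : 0 < ρ) (hρ1 : ρ < 1)
    (hr : ∀ i, |r i| ≤ ρ) (p : Fin n → ℝ≥0∞) (hp1 : ∑ i, p i = 1)
    (μ : Measure ℝ) [IsProbabilityMeasure μ]
    (hμ : μ = ∑ i, p i • μ.map (fun x => r i * x + t i)) :
    ∃ D : ℝ, 0 < D ∧ ∀ᵐ x ∂μ, |x| ≤ D := by
  obtain ⟨T, hT⟩ : ∃ T : ℝ, ∀ i, |t i| ≤ T := by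
    obtain ⟨T, hT⟩ := (Set.finite_range (fun i => |t i|)).bddAbove
    exact ⟨T, fun i => hT ⟨i, rfl⟩⟩
  set D : ℝ := max T 1 / (1 - ρ) with hD
  have hDpos : 0 < D := div_pos (by positivity) (by linarith)
  have hDeq : D = ρ * D + max T 1 := by
    have : 1 - ρ ≠ 0 := by linarith
    rw [hD]; field_simp; ring
  refine ⟨D, hDpos, ?_⟩
  -- `|x| - D` contracts by the factor `ρ` under every map of the system
  have step : ∀ R : ℝ, μ {x | R < |x| - D} ≤ μ {x | R / ρ < |x| - D} := by
    intro R
    have hm : MeasurableSet {x : ℝ | R < |x| - D} :=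
      measurableSet_lt measurable_const (by fun_prop)
    have e : μ {x | R < |x| - D} =
        ∑ i, p i * μ {x | R < |r i * x + t i| - D} := by
      conv_lhs => rw [hμ]
      simp only [Measure.coe_finsetSum, Finset.sum_apply, Measure.smul_apply, smul_eq_mul]
      refine Finset.sum_congr rfl fun i _ => ?_
      rw [Measure.map_apply (by fun_prop) hm]
      rfl
    rw [e]
    calc ∑ i, p i * μ {x | R < |r i * x + t i| - D}
        ≤ ∑ i, p i * μ {x | R / ρ < |x| - D} := by
          refine Finset.sum_le_sum fun i _ => mul_le_mul_right (measure_mono ?_) _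
          intro x hx
          simp only [mem_ofPred_eq] at hx ⊢
          rw [div_lt_iff₀ hρ0]
          have h1 := abs_add_le (r i * x) (t i)
          rw [abs_mul] at h1
          have h2 := mul_le_mul_of_nonneg_right (hr i) (abs_nonneg x)
          have h3 := (hT i).trans (le_max_left T 1)
          nlinarith
      _ = μ {x | R / ρ < |x| - D} := by rw [← Finset.sum_mul, hp1, one_mul]
  have hzero : ∀ R : ℝ, 0 < R → μ {x | R < |x| - D} = 0 := by
    intro R hR
    have hle : ∀ k : ℕ, μ {x | R < |x| - D} ≤ μ {x | R / ρ ^ k < |x| - D} := by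
      intro k
      induction k with
      | zero => simp
      | succ k ih =>
        refine ih.trans ((step _).trans_eq ?_)
        rw [pow_succ, div_div]
    have hanti : Antitone fun k : ℕ => {x : ℝ | R / ρ ^ k < |x| - D} := by
      intro k l hkl x hx
      simp only [mem_ofPred_eq] at hx ⊢
      refine lt_of_le_of_lt ?_ hx
      have := pow_le_pow_of_le_one hρ0.le hρ1.le hkl
      exact div_le_div_of_nonneg_left hR.le (by positivity) this
    have hlim := tendsto_measure_iInter_atTop (μ := μ)
      (s := fun k : ℕ => {x : ℝ | R / ρ ^ k < |x| - D})
      (fun k => (measurableSet_lt measurable_const (by fun_prop)).nullMeasurableSet) hanti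
      ⟨0, measure_ne_top _ _⟩
    have hemp : (⋂ k : ℕ, {x : ℝ | R / ρ ^ k < |x| - D}) = ∅ := by
      ext x
      simp only [mem_iInter, mem_ofPred_eq, mem_empty_iff_false, iff_false, not_forall, not_lt]
      obtain ⟨k, hk⟩ := exists_pow_lt_of_lt_one (show 0 < R / (|x| + 1) by positivity) hρ1
      refine ⟨k, ?_⟩
      rw [lt_div_iff₀ (by positivity)] at hk
      rw [le_div_iff₀ (by positivity)]
      have : 0 < ρ ^ k := by positivity
      nlinarith
    rw [hemp, measure_empty] at hlim
    exact le_antisymm (ge_of_tendsto' hlim hle) zero_le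
  have : ∀ᵐ x ∂μ, ∀ k : ℕ, |x| - D ≤ 1 / ((k : ℝ) + 1) := by
    rw [ae_all_iff]
    intro k
    have := hzero (1 / ((k : ℝ) + 1)) (by positivity)
    rw [ae_iff]
    simpa only [not_le] using this
  filter_upwards [this] with x hx
  have := ge_of_tendsto' (tendsto_one_div_add_atTop_nhds_zero_nat (𝕜 := ℝ)) hx
  linarith

lemma lintegral_selfSimilar {n : ℕ} (r t : Fin n → ℝ) (p : Fin n → ℝ≥0∞) (μ : Measure ℝ)
    (hμ : μ = ∑ i, p i • μ.map (fun x => r i * x + t i)) (G : ℝ → ℝ≥0∞) (hG : Measurable G) :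
    ∫⁻ x, G x ∂μ = ∑ i, p i * ∫⁻ x, G (r i * x + t i) ∂μ := by
  conv_lhs => rw [hμ]
  rw [lintegral_finsetSum_measure]
  refine Finset.sum_congr rfl fun i _ => ?_
  rw [lintegral_smul_measure, lintegral_map hG (by fun_prop), smul_eq_mul]

/-- Decoupling of scales: if `A` varies by at most a factor `c` on scale `η`, and the averages of
`B` along all affine images of `μ` of slope at least `l` are at most `K`, then the average of the
product `A * B` is at most `c * K` times that of `A`, provided `l` is small compared with `η`. -/
lemma decouple {n : ℕ} (r t : Fin n → ℝ) (ρ ρ' : ℝ) (hρ0 : 0 < ρ) (hρ1 : ρ < 1)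
    (hr : ∀ i, |r i| ≤ ρ) (hr' : ∀ i, ρ' ≤ |r i|) (p : Fin n → ℝ≥0∞)
    (μ : Measure ℝ) [IsProbabilityMeasure μ]
    (hμ : μ = ∑ i, p i • μ.map (fun x => r i * x + t i))
    (D : ℝ) (hD : 0 < D) (hsupp : ∀ᵐ x ∂μ, |x| ≤ D)
    (A B : ℝ → ℝ≥0∞) (hA : Measurable A) (hB : Measurable B)
    (η l : ℝ) (hη : 0 < η) (hl : l ≤ η / (2 * D) * ρ') (c K : ℝ≥0∞)
    (hAc : ∀ u v, |u - v| ≤ η → A u ≤ c * A v)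
    (hBK : ∀ σ s : ℝ, l ≤ |σ| → ∫⁻ x, B (σ * x + s) ∂μ ≤ K)
    (σ s : ℝ) (hσ : l ≤ |σ|) :
    ∫⁻ x, A (σ * x + s) * B (σ * x + s) ∂μ ≤ c * K * ∫⁻ x, A (σ * x + s) ∂μ := by
  have key : ∀ k : ℕ, ∀ σ s : ℝ, l ≤ |σ| → |σ| * ρ ^ k ≤ η / (2 * D) →
      ∫⁻ x, A (σ * x + s) * B (σ * x + s) ∂μ ≤ c * K * ∫⁻ x, A (σ * x + s) ∂μ := by
    intro k
    -- at slopes at most `η / (2 * D)` the factor `A` is nearly constant on the support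
    have small : ∀ σ s : ℝ, l ≤ |σ| → |σ| ≤ η / (2 * D) →
      ∫⁻ x, A (σ * x + s) * B (σ * x + s) ∂μ ≤ c * K * ∫⁻ x, A (σ * x + s) ∂μ := by
      intro σ s h1 h2
      rw [← lintegral_const_mul _ (by fun_prop)]
      have : ∀ᵐ y ∂μ, ∫⁻ x, A (σ * x + s) * B (σ * x + s) ∂μ ≤ c * K * A (σ * y + s) := by
        filter_upwards [hsupp] with y hy
        calc ∫⁻ x, A (σ * x + s) * B (σ * x + s) ∂μ
            ≤ ∫⁻ x, c * A (σ * y + s) * B (σ * x + s) ∂μ := by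
              refine lintegral_mono_ae ?_
              filter_upwards [hsupp] with x hx
              refine mul_le_mul_left (hAc _ _ ?_) _
              rw [show σ * x + s - (σ * y + s) = σ * (x - y) by ring, abs_mul]
              have h3 : |x - y| ≤ 2 * D := (abs_sub x y).trans (by linarith)
              rw [le_div_iff₀ (by positivity)] at h2
              exact (mul_le_mul_of_nonneg_left h3 (abs_nonneg _)).trans h2
          _ = c * A (σ * y + s) * ∫⁻ x, B (σ * x + s) ∂μ :=
              lintegral_const_mul _ (by fun_prop)
          _ ≤ c * A (σ * y + s) * K := by gcongr; exact hBK _ _ h1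
          _ = c * K * A (σ * y + s) := by ring
      calc ∫⁻ x, A (σ * x + s) * B (σ * x + s) ∂μ
          = ∫⁻ _, (∫⁻ x, A (σ * x + s) * B (σ * x + s) ∂μ) ∂μ := by simp
        _ ≤ _ := lintegral_mono_ae this
    induction k with
    | zero => intro σ s h1 h2; exact small σ s h1 (by simpa using h2)
    | succ k ih =>
      intro σ s h1 h2
      by_cases h3 : |σ| ≤ η / (2 * D)
      · exact small σ s h1 h3
      push Not at h3
      rw [lintegral_selfSimilar r t p μ hμ (fun x => A (σ * x + s) * B (σ * x + s)) (by fun_prop),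
        lintegral_selfSimilar r t p μ hμ (fun x => A (σ * x + s)) (by fun_prop), Finset.mul_sum]
      refine Finset.sum_le_sum fun i _ => ?_
      have e : ∀ x, σ * (r i * x + t i) + s = (σ * r i) * x + (σ * t i + s) := fun x => by ring
      simp only [e]
      have := ih (σ * r i) (σ * t i + s) ?_ ?_
      · calc _ ≤ p i * (c * K * ∫⁻ x, A (σ * r i * x + (σ * t i + s)) ∂μ) := by gcongr
          _ = _ := by ring
      · rw [abs_mul]
        have h4 : 0 < η / (2 * D) := by positivity
        calc l ≤ η / (2 * D) * ρ' := hl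
          _ ≤ η / (2 * D) * |r i| := by gcongr; exact hr' i
          _ ≤ _ := by gcongr
      · rw [abs_mul]
        calc |σ| * |r i| * ρ ^ k ≤ |σ| * ρ * ρ ^ k := by gcongr; exact hr i
          _ = |σ| * ρ ^ (k + 1) := by ring
          _ ≤ _ := h2
  obtain ⟨k, hk⟩ := exists_pow_lt_of_lt_one (show 0 < η / (2 * D) / (|σ| + 1) by positivity) hρ1
  refine key k σ s hσ ?_
  rw [lt_div_iff₀ (by positivity)] at hk
  have : 0 < ρ ^ k := by positivity
  nlinarith

/-! ### Exponential moments and almost sure upper bounds -/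

/-- Exponential moments of lacunary sums along the powers of `q`, uniformly over affine images of
`μ` of slope at least `L`. The size condition on `q` makes the term `F (σ x + s)` nearly constant
on pieces of `μ` that still have slope at least `L` after multiplication by `q`; `decouple` then
splits off this term, at the cost of a factor `exp (3 ε²)`. -/
lemma exp_moment {n : ℕ} (r t : Fin n → ℝ) (ρ ρ' : ℝ) (hρ0 : 0 < ρ) (hρ1 : ρ < 1)
    (hr : ∀ i, |r i| ≤ ρ) (hr' : ∀ i, ρ' ≤ |r i|) (p : Fin n → ℝ≥0∞)
    (μ : Measure ℝ) [IsProbabilityMeasure μ]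
    (hμ : μ = ∑ i, p i • μ.map (fun x => r i * x + t i))
    (D : ℝ) (hD : 0 < D) (hsupp : ∀ᵐ x ∂μ, |x| ≤ D)
    (F : ℝ → ℝ) (hF : Continuous F) (hF1 : ∀ u, |F u| ≤ 1)
    (ε L η q : ℝ) (hε0 : 0 < ε) (hε1 : ε ≤ 1) (hη : 0 < η) (hq : 1 ≤ q)
    (hFη : ∀ u v, |u - v| ≤ η → |F u - F v| ≤ ε)
    (hFL : ∀ σ s : ℝ, L ≤ |σ| → ∫ x, F (σ * x + s) ∂μ ≤ ε)
    (hqL : L ≤ η / (2 * D) * ρ' * q) (N : ℕ) :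
    ∀ σ s : ℝ, L ≤ |σ| →
      ∫⁻ x, ENNReal.ofReal (Real.exp (ε * ∑ k ∈ Finset.range N, F (q ^ k * (σ * x + s)))) ∂μ
        ≤ ENNReal.ofReal (Real.exp (3 * ε ^ 2)) ^ N := by
  have hq0 : 0 < q := by linarith
  induction N with
  | zero => intro σ s _; simp
  | succ N ih =>
    intro σ s hσ
    have hsplit : ∀ x : ℝ,
        ENNReal.ofReal (Real.exp (ε * ∑ k ∈ Finset.range (N + 1), F (q ^ k * (σ * x + s)))) =
        ENNReal.ofReal (Real.exp (ε * F (σ * x + s))) *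
        ENNReal.ofReal (Real.exp (ε * ∑ k ∈ Finset.range N, F (q ^ k * (q * (σ * x + s))))) := by
      intro x
      rw [← ENNReal.ofReal_mul (Real.exp_pos _).le, ← Real.exp_add, Finset.sum_range_succ']
      congr 3
      simp only [pow_succ, pow_zero, one_mul, mul_add]
      rw [add_comm]
      congr 2
      refine Finset.sum_congr rfl fun k _ => ?_
      congr 1
      ring
    simp only [hsplit]
    have hl : L / q ≤ η / (2 * D) * ρ' := by rwa [div_le_iff₀ hq0]
    have hσ' : L / q ≤ |σ| := by
      rw [div_le_iff₀ hq0]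
      nlinarith [abs_nonneg σ]
    have main := decouple r t ρ ρ' hρ0 hρ1 hr hr' p μ hμ D hD hsupp
      (fun u => ENNReal.ofReal (Real.exp (ε * F u)))
      (fun u => ENNReal.ofReal (Real.exp (ε * ∑ k ∈ Finset.range N, F (q ^ k * (q * u)))))
      (by have := hF.measurable; fun_prop) (by have := hF.measurable; fun_prop)
      η (L / q) hη hl (ENNReal.ofReal (Real.exp (ε ^ 2)))
      (ENNReal.ofReal (Real.exp (3 * ε ^ 2)) ^ N) ?_ ?_ σ s hσ'
    · refine main.trans ?_
      -- `exp y ≤ 1 + y + y²` for `|y| ≤ 1` bounds the average of the first factor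
      have hA : ∫⁻ x, ENNReal.ofReal (Real.exp (ε * F (σ * x + s))) ∂μ
          ≤ ENNReal.ofReal (Real.exp (2 * ε ^ 2)) := by
        have hint : Integrable (fun x => F (σ * x + s)) μ := by
          refine Integrable.of_bound (C := 1) ?_ (Eventually.of_forall fun x => ?_)
          · exact (hF.comp (by fun_prop)).aestronglyMeasurable
          · simpa using hF1 _
        have hle : ∀ x, Real.exp (ε * F (σ * x + s)) ≤ 1 + ε ^ 2 + ε * F (σ * x + s) := by
          intro x
          have h1 : |ε * F (σ * x + s)| ≤ ε := by
            rw [abs_mul, abs_of_pos hε0]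
            nlinarith [hF1 (σ * x + s)]
          have h2 := (abs_le.1 (Real.abs_exp_sub_one_sub_id_le (h1.trans hε1))).2
          have h3 : (ε * F (σ * x + s)) ^ 2 ≤ ε ^ 2 := sq_le_sq' (abs_le.1 h1).1 (abs_le.1 h1).2
          linarith
        calc ∫⁻ x, ENNReal.ofReal (Real.exp (ε * F (σ * x + s))) ∂μ
            ≤ ∫⁻ x, ENNReal.ofReal (1 + ε ^ 2 + ε * F (σ * x + s)) ∂μ :=
              lintegral_mono fun x => ENNReal.ofReal_le_ofReal (hle x)
          _ = ENNReal.ofReal (∫ x, (1 + ε ^ 2 + ε * F (σ * x + s)) ∂μ) := by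
              rw [ofReal_integral_eq_lintegral_ofReal]
              · exact (integrable_const _).add (hint.const_mul _)
              · exact Eventually.of_forall fun x => (Real.exp_pos _).le.trans (hle x)
          _ ≤ ENNReal.ofReal (Real.exp (2 * ε ^ 2)) := by
              refine ENNReal.ofReal_le_ofReal ?_
              rw [integral_add (integrable_const _) (hint.const_mul _), integral_const_mul]
              simp only [integral_const, probReal_univ, one_smul]
              have h4 := hFL σ s hσ
              have h5 := Real.add_one_le_exp (2 * ε ^ 2)
              nlinarith
      calc _ ≤ ENNReal.ofReal (Real.exp (ε ^ 2)) * ENNReal.ofReal (Real.exp (3 * ε ^ 2)) ^ N *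
            ENNReal.ofReal (Real.exp (2 * ε ^ 2)) := by gcongr
        _ = (ENNReal.ofReal (Real.exp (ε ^ 2)) * ENNReal.ofReal (Real.exp (2 * ε ^ 2))) *
            ENNReal.ofReal (Real.exp (3 * ε ^ 2)) ^ N := by ring
        _ = _ := by
            rw [← ENNReal.ofReal_mul (Real.exp_pos _).le, ← Real.exp_add, pow_succ' _ N,
              show ε ^ 2 + 2 * ε ^ 2 = 3 * ε ^ 2 by ring]
    · intro u v huv
      rw [← ENNReal.ofReal_mul (Real.exp_pos _).le, ← Real.exp_add]
      refine ENNReal.ofReal_le_ofReal (Real.exp_le_exp.2 ?_)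
      have := (abs_le.1 (hFη u v huv)).2
      nlinarith
    · intro σ' s' h
      have := ih (q * σ') (q * s') (by rw [abs_mul, abs_of_pos hq0]; rwa [div_le_iff₀' hq0] at h)
      simpa only [mul_add, mul_assoc] using this

/-- Markov's inequality and the Borel–Cantelli lemma applied to exponential moments. -/
lemma ae_eventually_le_of_exp_moment (μ : Measure ℝ) [IsProbabilityMeasure μ]
    (S : ℕ → ℝ → ℝ) (hS : ∀ N, Measurable (S N)) (ε : ℝ) (hε : 0 < ε)
    (h : ∀ N, ∫⁻ x, ENNReal.ofReal (Real.exp (ε * S N x)) ∂μ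
      ≤ ENNReal.ofReal (Real.exp (3 * ε ^ 2)) ^ N) :
    ∀ᵐ x ∂μ, ∀ᶠ N : ℕ in atTop, S N x ≤ 4 * ε * N := by
  have hb : ∀ N : ℕ, μ {x | 4 * ε * N < S N x} ≤ ENNReal.ofReal (Real.exp (-ε ^ 2) ^ N) := by
    intro N
    have h1 := mul_meas_ge_le_lintegral (μ := μ)
      (f := fun x => ENNReal.ofReal (Real.exp (ε * S N x)))
      (by have := hS N; fun_prop) (ENNReal.ofReal (Real.exp (4 * ε ^ 2 * N)))
    have h2 : μ {x | 4 * ε * N < S N x} ≤ μ {x | ENNReal.ofReal (Real.exp (4 * ε ^ 2 * N)) ≤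
        ENNReal.ofReal (Real.exp (ε * S N x))} := by
      refine measure_mono fun x hx => ?_
      simp only [mem_ofPred_eq] at hx ⊢
      refine ENNReal.ofReal_le_ofReal (Real.exp_le_exp.2 ?_)
      nlinarith
    have h3 := (mul_le_mul_right h2 (ENNReal.ofReal (Real.exp (4 * ε ^ 2 * N)))).trans
      (h1.trans (h N))
    have hpos : ENNReal.ofReal (Real.exp (4 * ε ^ 2 * N)) ≠ 0 := by
      simpa using Real.exp_pos _
    rw [← ENNReal.mul_le_mul_iff_right hpos ENNReal.ofReal_ne_top]
    refine h3.trans_eq ?_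
    rw [← ENNReal.ofReal_pow (Real.exp_pos _).le, ← ENNReal.ofReal_mul (Real.exp_pos _).le,
      ← Real.exp_nat_mul, ← Real.exp_nat_mul, ← Real.exp_add]
    congr 2
    ring
  have hsum : (∑' N : ℕ, μ {x | 4 * ε * N < S N x}) ≠ ∞ := by
    refine ne_top_of_le_ne_top ?_ (ENNReal.tsum_le_tsum hb)
    have : Summable fun N : ℕ => Real.exp (-ε ^ 2) ^ N :=
      summable_geometric_of_lt_one (Real.exp_pos _).le (by
        rw [Real.exp_lt_one_iff]; have := pow_pos hε 2; linarith)
    exact this.tsum_ofReal_ne_top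
  filter_upwards [ae_eventually_notMem hsum] with x hx
  filter_upwards [hx] with N hN
  simpa using hN

/-- Reassembling a bounded sequence from its shifted subsequences along residue classes. -/
lemma eventually_sum_le (a : ℕ → ℝ) (ha : ∀ k, |a k| ≤ 1) (c δ : ℝ) (hc : 0 ≤ c) (hδ : 0 < δ)
    (i₀ j : ℕ) (hi₀ : 1 ≤ i₀) (hj : 1 ≤ j)
    (h : ∀ i < j, ∀ᶠ N : ℕ in atTop, ∑ k ∈ Finset.range N, a (i₀ + i + j * k) ≤ c * N) :
    ∀ᶠ N : ℕ in atTop, ∑ k ∈ Finset.Icc 1 N, a k ≤ (c + δ) * N := by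
  -- a full block of length `j * N` is the union of `j` progressions of length `N`
  have hblock : ∀ N : ℕ, ∑ k ∈ Finset.range (j * N), a (i₀ + k) =
      ∑ i ∈ Finset.range j, ∑ k ∈ Finset.range N, a (i₀ + i + j * k) := by
    intro N
    induction N with
    | zero => simp
    | succ N ih =>
      rw [mul_add, mul_one, Finset.sum_range_add, ih]
      simp only [Finset.sum_range_succ, Finset.sum_add_distrib]
      congr 1
      refine Finset.sum_congr rfl fun i _ => ?_
      congr 1
      ring
  have h' : ∀ᶠ N : ℕ in atTop, ∀ i ∈ Finset.range j,
      ∑ k ∈ Finset.range N, a (i₀ + i + j * k) ≤ c * N :=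
    (Finset.eventually_all _).2 fun i hi => h i (Finset.mem_range.1 hi)
  have hdiv : Tendsto (fun M : ℕ => M / j) atTop atTop := Nat.tendsto_div_const_atTop (by omega)
  have hbig : ∀ᶠ M : ℕ in atTop, ((j : ℝ) + 2 * i₀) / δ ≤ M :=
    tendsto_natCast_atTop_atTop.eventually_ge_atTop _
  filter_upwards [hdiv.eventually h', hbig] with M hM hM2
  have hcard : ∀ s : Finset ℕ, ∀ b : ℕ → ℝ, (∀ k, |b k| ≤ 1) → ∑ k ∈ s, b k ≤ s.card := by
    intro s b hb
    calc ∑ k ∈ s, b k ≤ ∑ k ∈ s, (1 : ℝ) := Finset.sum_le_sum fun k _ => (abs_le.1 (hb k)).2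
      _ = s.card := by simp
  have h1 : ∑ k ∈ Finset.range (j * (M / j)), a (i₀ + k) ≤ c * M := by
    rw [hblock]
    calc _ ≤ ∑ i ∈ Finset.range j, c * ((M / j : ℕ) : ℝ) := Finset.sum_le_sum hM
      _ = c * ((j * (M / j) : ℕ) : ℝ) := by simp; ring
      _ ≤ c * M := by gcongr; exact Nat.mul_div_le M j
  have h2 : ∑ k ∈ Finset.range M, a (i₀ + k) ≤ c * M + j := by
    have e : M = j * (M / j) + M % j := (Nat.div_add_mod M j).symm
    have h3 : ∑ k ∈ Finset.range M, a (i₀ + k) = ∑ k ∈ Finset.range (j * (M / j)), a (i₀ + k) +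
        ∑ k ∈ Finset.range (M % j), a (i₀ + (j * (M / j) + k)) := by
      rw [← Finset.sum_range_add (fun k => a (i₀ + k)), ← e]
    have h4 := hcard (Finset.range (M % j)) (fun k => a (i₀ + (j * (M / j) + k))) fun k => ha _
    have h5 : ((M % j : ℕ) : ℝ) ≤ j := by exact_mod_cast (Nat.mod_lt M (by omega)).le
    rw [Finset.card_range] at h4
    linarith
  have h6 : ∑ k ∈ Finset.Icc 1 M, a k ≤ ∑ k ∈ Finset.range M, a (i₀ + k) + 2 * i₀ := by
    have e1 : ∑ k ∈ Finset.Icc 1 M, a k = ∑ k ∈ Finset.range (1 + M), a k - a 0 := by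
      rw [Finset.sum_range_add, Finset.sum_range_one]
      rw [← Finset.Ico_add_one_right_eq_Icc, Finset.sum_Ico_eq_sum_range]
      simp
    obtain ⟨d, rfl⟩ : ∃ d, i₀ = d + 1 := ⟨i₀ - 1, by omega⟩
    have e2 : ∑ k ∈ Finset.range M, a (d + 1 + k) = ∑ k ∈ Finset.range (1 + M), a k
        + ∑ k ∈ Finset.range d, a (1 + M + k) - ∑ k ∈ Finset.range d, a (1 + k) - a 0 := by
      have x1 := Finset.sum_range_add a (d + 1) M
      have x2 := Finset.sum_range_add a (1 + M) d
      have x3 := Finset.sum_range_add a 1 d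
      rw [show d + 1 + M = 1 + M + d by ring] at x1
      rw [show 1 + d = d + 1 by ring, Finset.sum_range_one] at x3
      linarith
    have h8 := hcard (Finset.range d) (fun k => a (1 + k)) fun k => ha _
    have h9 := hcard (Finset.range d) (fun k => -a (1 + M + k)) fun k => by simpa using ha _
    rw [Finset.sum_neg_distrib] at h9
    rw [Finset.card_range] at h8 h9
    push_cast
    linarith
  have h7 : (j : ℝ) + 2 * i₀ ≤ δ * M := by rwa [div_le_iff₀' hδ] at hM2
  linarith

/-- If the averages of `F` along affine images of `μ` become nonpositive in the limit of large
slopes, then the averages of `F` along almost every orbit under multiplication by `P` have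
nonpositive upper limit. -/
lemma ae_forall_eventually_sum_le {n : ℕ} (r t : Fin n → ℝ) (ρ ρ' : ℝ) (hρ0 : 0 < ρ)
    (hρ1 : ρ < 1) (hρ' : 0 < ρ')
    (hr : ∀ i, |r i| ≤ ρ) (hr' : ∀ i, ρ' ≤ |r i|) (p : Fin n → ℝ≥0∞)
    (μ : Measure ℝ) [IsProbabilityMeasure μ]
    (hμ : μ = ∑ i, p i • μ.map (fun x => r i * x + t i))
    (D : ℝ) (hD : 0 < D) (hsupp : ∀ᵐ x ∂μ, |x| ≤ D)
    (F : ℝ → ℝ) (hF : UniformContinuous F) (hF1 : ∀ u, |F u| ≤ 1)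
    (hFL : ∀ ε > 0, ∃ L : ℝ, ∀ σ s : ℝ, L ≤ |σ| → ∫ x, F (σ * x + s) ∂μ ≤ ε)
    (P : ℕ) (hP : 2 ≤ P) :
    ∀ᵐ x ∂μ, ∀ ε > 0, ∀ᶠ N : ℕ in atTop,
      ∑ k ∈ Finset.Icc 1 N, F ((P : ℝ) ^ k * x) ≤ ε * N := by
  have hP1 : (1 : ℝ) < P := by exact_mod_cast hP
  have main : ∀ ε : ℝ, 0 < ε → ε ≤ 1 → ∀ᵐ x ∂μ, ∀ᶠ N : ℕ in atTop,
      ∑ k ∈ Finset.Icc 1 N, F ((P : ℝ) ^ k * x) ≤ (4 * ε + ε) * N := by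
    intro ε hε0 hε1
    obtain ⟨L, hL⟩ := hFL ε hε0
    obtain ⟨η', hη', hFη'⟩ := Metric.uniformContinuous_iff.1 hF ε hε0
    have hFη : ∀ u v, |u - v| ≤ η' / 2 → |F u - F v| ≤ ε := fun u v huv =>
      (hFη' (show dist u v < η' by rw [Real.dist_eq]; linarith)).le
    obtain ⟨j, hj⟩ := pow_unbounded_of_one_lt (L / (η' / 2 / (2 * D) * ρ')) hP1
    rw [div_lt_iff₀' (by positivity)] at hj
    obtain ⟨i₀, hi₀⟩ := pow_unbounded_of_one_lt L hP1
    have hqL : L ≤ η' / 2 / (2 * D) * ρ' * (P : ℝ) ^ (j + 1) := by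
      refine hj.le.trans ?_
      gcongr
      · exact hP1.le
      · omega
    have hae : ∀ᵐ x ∂μ, ∀ i : ℕ, ∀ᶠ N : ℕ in atTop,
        ∑ k ∈ Finset.range N, F (((P : ℝ) ^ (j + 1)) ^ k * ((P : ℝ) ^ (i₀ + 1 + i) * x + 0))
          ≤ 4 * ε * N := by
      rw [ae_all_iff]
      intro i
      refine ae_eventually_le_of_exp_moment μ
        (fun N x => ∑ k ∈ Finset.range N,
          F (((P : ℝ) ^ (j + 1)) ^ k * ((P : ℝ) ^ (i₀ + 1 + i) * x + 0))) ?_ ε hε0 ?_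
      · intro N
        have := hF.continuous.measurable
        fun_prop
      · intro N
        refine exp_moment r t ρ ρ' hρ0 hρ1 hr hr' p μ hμ D hD hsupp F hF.continuous hF1 ε L (η' / 2)
          ((P : ℝ) ^ (j + 1)) hε0 hε1 (by positivity) (one_le_pow₀ hP1.le) hFη hL hqL N _ 0 ?_
        rw [abs_of_pos (by positivity)]
        refine hi₀.le.trans ?_
        gcongr
        · exact hP1.le
        · omega
    filter_upwards [hae] with x hx
    refine eventually_sum_le (fun k => F ((P : ℝ) ^ k * x)) (fun k => hF1 _) (4 * ε) ε
      (by positivity) hε0 (i₀ + 1) (j + 1) (by omega) (by omega) fun i _ => ?_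
    filter_upwards [hx i] with N hN
    refine le_of_eq_of_le (Finset.sum_congr rfl fun k _ => ?_) hN
    rw [add_zero, pow_add _ (i₀ + 1 + i), pow_mul]
    congr 1
    ring
  have hall : ∀ᵐ x ∂μ, ∀ k : ℕ, ∀ᶠ N : ℕ in atTop,
      ∑ i ∈ Finset.Icc 1 N, F ((P : ℝ) ^ i * x) ≤
        (4 * (1 / ((k : ℝ) + 1)) + 1 / ((k : ℝ) + 1)) * N := by
    rw [ae_all_iff]
    intro k
    refine main _ (by positivity) ?_
    rw [div_le_one (by positivity)]
    have := k.cast_nonneg (α := ℝ)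
    linarith
  filter_upwards [hall] with x hx ε hε
  obtain ⟨k, hk⟩ := exists_nat_one_div_lt (show 0 < ε / 5 by positivity)
  filter_upwards [hx k] with N hN
  refine hN.trans ?_
  gcongr
  linarith

/-! ### Passage to characters -/

lemma integral_cos_le (μ : Measure ℝ) [IsProbabilityMeasure μ] (m φ σ s : ℝ) :
    ∫ x, Real.cos (2 * Real.pi * m * (σ * x + s) + φ) ∂μ ≤ ‖fourierTransform μ (m * σ)‖ := by
  set ψ : ℝ := 2 * Real.pi * m * s + φ with hψ
  have hint : Integrable (fun x : ℝ => Complex.exp (ψ * Complex.I) *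
      Complex.exp (((2 * Real.pi * (m * σ) * x : ℝ) : ℂ) * Complex.I)) μ := by
    refine Integrable.of_bound (C := 1) ?_ (Eventually.of_forall fun x => ?_)
    · exact Continuous.aestronglyMeasurable (by fun_prop)
    · rw [norm_mul, Complex.norm_exp_ofReal_mul_I, Complex.norm_exp_ofReal_mul_I, one_mul]
  have e : ∫ x, Real.cos (2 * Real.pi * m * (σ * x + s) + φ) ∂μ =
      (Complex.exp (ψ * Complex.I) * fourierTransform μ (m * σ)).re := by
    rw [fourierTransform, ← integral_const_mul]
    refine Eq.trans ?_ (integral_re hint)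
    refine integral_congr_ae (Eventually.of_forall fun x => ?_)
    simp only [← Complex.exp_add, ← add_mul, ← Complex.ofReal_add]
    simp only [RCLike.re_eq_complex_re, Complex.exp_ofReal_mul_I_re]
    congr 1
    rw [hψ]; ring
  rw [e]
  refine (Complex.re_le_norm _).trans ?_
  rw [norm_mul, Complex.norm_exp_ofReal_mul_I, one_mul]

lemma exists_fourier_le (μ : Measure ℝ) (h : Rajchman μ) (m : ℝ) (hm : m ≠ 0) (ε : ℝ)
    (hε : 0 < ε) : ∃ L : ℝ, ∀ σ : ℝ, L ≤ |σ| → ‖fourierTransform μ (m * σ)‖ ≤ ε := by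
  have h1 : ∀ᶠ q in cocompact ℝ, ‖fourierTransform μ q‖ < ε := by
    have := (tendsto_zero_iff_norm_tendsto_zero.1 h).eventually (gt_mem_nhds hε)
    exact this
  rw [← Metric.cobounded_eq_cocompact, ← comap_norm_atTop, eventually_comap, eventually_atTop] at h1
  obtain ⟨L, hL⟩ := h1
  refine ⟨L / |m|, fun σ hσ => (hL _ ?_ _ rfl).le⟩
  rw [div_le_iff₀' (by positivity)] at hσ
  simpa [abs_mul] using hσ

lemma uniformContinuous_cos_affine (c φ : ℝ) :
    UniformContinuous fun u : ℝ => Real.cos (c * u + φ) := by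
  have h1 : UniformContinuous Real.cos := by
    refine (LipschitzWith.of_dist_le_mul (K := 1) fun x y => ?_).uniformContinuous
    simpa [Real.dist_eq] using Real.abs_cos_sub_cos_le x y
  have h2 : UniformContinuous fun u : ℝ => c * u + φ := by
    refine (LipschitzWith.of_dist_le_mul (K := ‖c‖₊) fun x y => ?_).uniformContinuous
    simp [Real.dist_eq, ← mul_sub, abs_mul]
  exact h1.comp h2

lemma tendsto_avg_zero (a : ℕ → ℝ)
    (h1 : ∀ ε > 0, ∀ᶠ N : ℕ in atTop, ∑ k ∈ Finset.Icc 1 N, a k ≤ ε * N)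
    (h2 : ∀ ε > 0, ∀ᶠ N : ℕ in atTop, ∑ k ∈ Finset.Icc 1 N, -a k ≤ ε * N) :
    Tendsto (fun N : ℕ => (N : ℝ)⁻¹ * ∑ k ∈ Finset.Icc 1 N, a k) atTop (𝓝 0) := by
  rw [Metric.tendsto_nhds]
  intro ε hε
  filter_upwards [h1 (ε / 2) (by positivity), h2 (ε / 2) (by positivity), eventually_gt_atTop 0]
    with N hN1 hN2 hN
  have hN' : (0 : ℝ) < N := by exact_mod_cast hN
  rw [Finset.sum_neg_distrib] at hN2
  rw [Real.dist_eq, sub_zero, abs_mul, abs_of_pos (inv_pos.2 hN'), inv_mul_lt_iff₀ hN']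
  have : |∑ k ∈ Finset.Icc 1 N, a k| ≤ ε / 2 * N := abs_le.2 ⟨by linarith, hN1⟩
  nlinarith

/-- Weyl's criterion: equidistribution follows from the decay of the averages of the nontrivial
characters, since trigonometric polynomials are uniformly dense. -/
lemma pNormal_of_fourier (P : ℕ) (x : ℝ)
    (h : ∀ m : ℤ, m ≠ 0 → Tendsto (fun N : ℕ => (N : ℂ)⁻¹ * ∑ k ∈ Finset.Icc 1 N,
      fourier m (((P : ℝ) ^ k * x : ℝ) : UnitAddCircle)) atTop (𝓝 0)) : PNormal P x := by
  have hspan : ∀ g ∈ Submodule.span ℂ (range (@fourier 1)),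
      Tendsto (fun N : ℕ => (N : ℂ)⁻¹ * ∑ k ∈ Finset.Icc 1 N,
        g (((P : ℝ) ^ k * x : ℝ) : UnitAddCircle)) atTop (𝓝 (∫ z, g z)) := by
    intro g hg
    induction hg using Submodule.span_induction with
    | mem g hg =>
      obtain ⟨m, rfl⟩ := hg
      by_cases hm : m = 0
      · subst hm
        simp only [fourier_zero, integral_const, Finset.sum_const, Nat.card_Icc]
        refine tendsto_const_nhds.congr' ?_
        filter_upwards [eventually_gt_atTop 0] with N hN
        have : (N : ℂ) ≠ 0 := by exact_mod_cast hN.ne'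
        simp [this, Measure.real]
      · have hz : ∫ z : UnitAddCircle, fourier m z = 0 := by
          have hneg := fun z : UnitAddCircle => fourier_add_half_inv_index hm one_pos z
          have h1 := integral_add_right_eq_self (μ := (volume : Measure UnitAddCircle))
            (fun z => fourier m z) ((1 / 2 / m : ℝ) : UnitAddCircle)
          simp only [hneg, integral_neg] at h1
          exact self_eq_neg.1 h1.symm
        rw [hz]
        exact h m hm
    | zero => simp
    | add g₁ g₂ _ _ h1 h2 =>
      have e : ∫ z, (g₁ + g₂) z = (∫ z, g₁ z) + ∫ z, g₂ z :=
        integral_add (g₁.continuous.integrable_of_hasCompactSupport (.of_compactSpace _))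
          (g₂.continuous.integrable_of_hasCompactSupport (.of_compactSpace _))
      rw [e]
      refine (h1.add h2).congr fun N => ?_
      simp only [ContinuousMap.add_apply, Finset.sum_add_distrib, mul_add]
    | smul c g _ h1 =>
      have e : ∫ z, (c • g) z = c * ∫ z, g z := integral_const_mul _ _
      rw [e]
      refine (h1.const_mul c).congr fun N => ?_
      simp only [ContinuousMap.smul_apply, smul_eq_mul, Finset.mul_sum]
      exact Finset.sum_congr rfl fun k _ => by ring
  intro g
  let G : C(UnitAddCircle, ℂ) := ⟨fun z => (g z : ℂ), by fun_prop⟩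
  have hG : Tendsto (fun N : ℕ => (N : ℂ)⁻¹ * ∑ k ∈ Finset.Icc 1 N,
        G (((P : ℝ) ^ k * x : ℝ) : UnitAddCircle)) atTop (𝓝 (∫ z, G z)) := by
    rw [Metric.tendsto_nhds]
    intro ε hε
    have hmem : G ∈ closure (Submodule.span ℂ (range (@fourier 1)) : Set C(UnitAddCircle, ℂ)) := by
      rw [← Submodule.topologicalClosure_coe, span_fourier_closure_eq_top]
      trivial
    obtain ⟨H, hH, hGH⟩ := Metric.mem_closure_iff.1 hmem (ε / 3) (by positivity)
    have hpt : ∀ z, ‖G z - H z‖ ≤ ε / 3 := fun z => by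
      rw [← dist_eq_norm]
      exact (ContinuousMap.dist_apply_le_dist z).trans hGH.le
    have hI : ‖(∫ z, H z) - ∫ z, G z‖ ≤ ε / 3 := by
      rw [← integral_sub (H.continuous.integrable_of_hasCompactSupport (.of_compactSpace _))
          (G.continuous.integrable_of_hasCompactSupport (.of_compactSpace _))]
      refine (norm_integral_le_of_norm_le_const (C := ε / 3)
        (Eventually.of_forall fun z => ?_)).trans ?_
      · rw [norm_sub_rev]; exact hpt z
      · simp [Measure.real]
    filter_upwards [Metric.tendsto_nhds.1 (hspan H hH) (ε / 3) (by positivity),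
      eventually_gt_atTop 0] with N hN hN0
    rw [dist_eq_norm] at hN ⊢
    have hA : ‖(N : ℂ)⁻¹ * ∑ k ∈ Finset.Icc 1 N, G (((P : ℝ) ^ k * x : ℝ) : UnitAddCircle) -
        (N : ℂ)⁻¹ * ∑ k ∈ Finset.Icc 1 N, H (((P : ℝ) ^ k * x : ℝ) : UnitAddCircle)‖ ≤ ε / 3 := by
      have hN' : (0 : ℝ) < N := by exact_mod_cast hN0
      rw [← mul_sub, ← Finset.sum_sub_distrib, norm_mul, norm_inv, Complex.norm_natCast,
        inv_mul_le_iff₀ hN']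
      refine (norm_sum_le_of_le _ fun k _ => hpt _).trans_eq ?_
      simp
    calc _ = ‖((N : ℂ)⁻¹ * ∑ k ∈ Finset.Icc 1 N, G (((P : ℝ) ^ k * x : ℝ) : UnitAddCircle) -
        (N : ℂ)⁻¹ * ∑ k ∈ Finset.Icc 1 N, H (((P : ℝ) ^ k * x : ℝ) : UnitAddCircle)) +
        ((N : ℂ)⁻¹ * ∑ k ∈ Finset.Icc 1 N, H (((P : ℝ) ^ k * x : ℝ) : UnitAddCircle)
          - ∫ z, H z) + ((∫ z, H z) - ∫ z, G z)‖ := by congr 1; ring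
      _ ≤ _ := norm_add₃_le
      _ < ε := by linarith
  have e : ∫ z, G z = ((∫ z, g z : ℝ) : ℂ) := integral_ofReal
  rw [e] at hG
  have := (Complex.continuous_re.tendsto _).comp hG
  rw [Complex.ofReal_re] at this
  refine this.congr fun N => ?_
  simp only [Function.comp_apply, G, ContinuousMap.coe_mk, ← Complex.ofReal_sum,
    ← Complex.ofReal_natCast, ← Complex.ofReal_inv, ← Complex.ofReal_mul, Complex.ofReal_re]

lemma selfSimilar_pointwiseAbsolutelyNormal {n : ℕ} (r t : Fin n → ℝ) (ρ ρ' : ℝ) (hρ0 : 0 < ρ)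
    (hρ1 : ρ < 1) (hρ' : 0 < ρ')
    (hr : ∀ i, |r i| ≤ ρ) (hr' : ∀ i, ρ' ≤ |r i|) (p : Fin n → ℝ≥0∞) (hp1 : ∑ i, p i = 1)
    (μ : Measure ℝ) [IsProbabilityMeasure μ]
    (hμ : μ = ∑ i, p i • μ.map (fun x => r i * x + t i)) (hRaj : Rajchman μ) :
    PointwiseAbsolutelyNormal μ := by
  obtain ⟨D, hD, hsupp⟩ := exists_bound r t ρ hρ0 hρ1 hr p hp1 μ hμ
  have key : ∀ φ : ℝ, ∀ᵐ x ∂μ, ∀ P : ℕ, 2 ≤ P → ∀ m : ℤ, m ≠ 0 → ∀ ε > 0, ∀ᶠ N : ℕ in atTop,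
      ∑ k ∈ Finset.Icc 1 N, Real.cos (2 * Real.pi * m * ((P : ℝ) ^ k * x) + φ) ≤ ε * N := by
    intro φ
    simp only [ae_all_iff, eventually_imp_distrib_left]
    intro P hP m hm
    refine ae_forall_eventually_sum_le r t ρ ρ' hρ0 hρ1 hρ' hr hr' p μ hμ D hD hsupp
      (fun u => Real.cos (2 * Real.pi * m * u + φ)) (uniformContinuous_cos_affine _ _)
      (fun u => Real.abs_cos_le_one _) (fun ε hε => ?_) P hP
    obtain ⟨L, hL⟩ := exists_fourier_le μ hRaj m (by exact_mod_cast hm) ε hε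
    exact ⟨L, fun σ s hσ => (integral_cos_le μ m φ σ s).trans (hL σ hσ)⟩
  -- the phases `0, π` bound the cosine sums from both sides, the phases `∓π/2` the sine sums
  filter_upwards [key 0, key Real.pi, key (-(Real.pi / 2)), key (Real.pi / 2)]
    with x h1 h2 h3 h4 P hP
  refine pNormal_of_fourier P x fun m hm => ?_
  have hc := tendsto_avg_zero (fun k => Real.cos (2 * Real.pi * m * ((P : ℝ) ^ k * x)))
    (by simpa using h1 P hP m hm) (by simpa only [Real.cos_add_pi] using h2 P hP m hm)
  have hs := tendsto_avg_zero (fun k => Real.sin (2 * Real.pi * m * ((P : ℝ) ^ k * x)))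
    (by simpa only [← sub_eq_add_neg, Real.cos_sub_pi_div_two] using h3 P hP m hm)
    (by simpa only [Real.cos_add_pi_div_two] using h4 P hP m hm)
  have := ((Complex.continuous_ofReal.tendsto _).comp hc).add
    (((Complex.continuous_ofReal.tendsto _).comp hs).mul_const Complex.I)
  simp only [Complex.ofReal_zero, zero_mul, add_zero] at this
  refine this.congr fun N => ?_
  simp only [Function.comp_apply, Complex.ofReal_mul, Complex.ofReal_sum, Complex.ofReal_inv,
    Complex.ofReal_natCast]
  rw [mul_assoc (_⁻¹) _ Complex.I, ← mul_add, Finset.sum_mul, ← Finset.sum_add_distrib]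
  congr 1
  refine Finset.sum_congr rfl fun k _ => ?_
  rw [fourier_coe_apply, Complex.ofReal_cos, Complex.ofReal_sin, ← Complex.exp_mul_I]
  congr 1
  push_cast
  ring

theorem stmt7 {n : ℕ} (hn : 2 ≤ n) (r t : Fin n → ℝ) (f : Fin n → ℝ → ℝ)
    (hf : ∀ i x, f i x = r i * x + t i)
    (hr : ∀ i, 0 < |r i| ∧ |r i| < 1)
    (a b : ℝ) (hab : a < b)
    (hmaps : ∀ i, MapsTo (f i) (Icc a b) (Icc a b))
    (hfix : ∃ i j : Fin n, ∃ y ∈ Icc a b, ∃ z ∈ Icc a b, f i y = y ∧ f j z = z ∧ y ≠ z)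
    (p : Fin n → ℝ≥0∞) (hp : ∀ i, 0 < p i) (hp1 : ∑ i, p i = 1)
    (μ : Measure ℝ) (hμP : IsProbabilityMeasure μ)
    (hμ : μ = ∑ i, p i • μ.map (f i))
    (hRaj : Rajchman μ) :
    PointwiseAbsolutelyNormal μ := by
  have hne : Nonempty (Fin n) := ⟨⟨0, by omega⟩⟩
  obtain ⟨i₁, h₁⟩ := Finite.exists_max fun i => |r i|
  obtain ⟨i₂, h₂⟩ := Finite.exists_min fun i => |r i|
  have hff : ∀ i, f i = fun x => r i * x + t i := fun i => funext (hf i)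
  simp only [hff] at hμ
  exact selfSimilar_pointwiseAbsolutelyNormal r t |r i₁| |r i₂| (hr i₁).1 (hr i₁).2 (hr i₂).1
    h₁ h₂ p hp1 μ hμ hRaj
end
end
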